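/- arXiv:2302.09623 — 2 statements merged into one kernel-verified Lean document; each statement's English description precedes it below -/
import Mathlib

section
/- Let F : 𝕋 → ℂ be absolutely continuous with Ḟ ∈ L^∞(𝕋), and let f = P[F] be its Poisson integral. Then f_z and the conjugate of f_z̄ are bounded on 𝔻 (i.e., belong to H^∞(𝔻)) if and only if the Hilbert transform H(Ḟ) belongs to L^∞(𝕋); and in that case 2 i z f_z(z) = P[Ḟ + i H(Ḟ)](z) for all z ∈ 𝔻. -/
open MeasureTheory Complex Metric Set Filter
open scoped Real Topology ENNReal

noncomputable section

/-- The Poisson kernel `P(z) = (1-|z|^2)/|1-z|^2`. -/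
def poissonKer (z : ℂ) : ℝ := (1 - ‖z‖ ^ 2) / ‖1 - z‖ ^ 2

/-- The Poisson integral of a boundary function `F` defined on the unit circle. -/
def poissonInt (F : ℂ → ℂ) (z : ℂ) : ℂ :=
  (1 / (2 * π)) * ∫ t in (0:ℝ)..(2 * π),
    (poissonKer (z * Complex.exp (-(t : ℂ) * Complex.I)) : ℂ) *
      F (Complex.exp ((t : ℂ) * Complex.I))

/-- The Poisson integral of a (2π-periodic) function of the angular variable. -/
def poissonIntR (φ : ℝ → ℂ) (z : ℂ) : ℂ :=
  (1 / (2 * π)) * ∫ t in (0:ℝ)..(2 * π),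
    (poissonKer (z * Complex.exp (-(t : ℂ) * Complex.I)) : ℂ) * φ t

/-- The conjugate Poisson kernel `P̃(z) = Im((1+z)/(1-z))`. -/
def conjPoissonKer (z : ℂ) : ℝ := ((1 + z) / (1 - z)).im

/-- The conjugate Poisson integral of a function of the angular variable. -/
def conjPoissonIntR (φ : ℝ → ℂ) (z : ℂ) : ℂ :=
  (1 / (2 * π)) * ∫ t in (0:ℝ)..(2 * π),
    (conjPoissonKer (z * Complex.exp (-(t : ℂ) * Complex.I)) : ℂ) * φ t

/-- Wirtinger derivative `f_z = (1/2)(∂ₓ - i ∂_y) f`. -/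
def wdz (f : ℂ → ℂ) (z : ℂ) : ℂ :=
  (1 / 2) * (fderiv ℝ f z 1 - Complex.I * fderiv ℝ f z Complex.I)

/-- Wirtinger derivative `f_z̄ = (1/2)(∂ₓ + i ∂_y) f`. -/
def wdzb (f : ℂ → ℂ) (z : ℂ) : ℂ :=
  (1 / 2) * (fderiv ℝ f z 1 + Complex.I * fderiv ℝ f z Complex.I)

/-- The angular derivative `f_θ(z) = i (z f_z(z) - z̄ f_z̄(z))`. -/
def fTheta (f : ℂ → ℂ) (z : ℂ) : ℂ :=
  Complex.I * (z * wdz f z - (starRingEnd ℂ) z * wdzb f z)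

/-- The radial derivative multiplied by `r`: `r f_r(z) = z f_z(z) + z̄ f_z̄(z)`. -/
def rFr (f : ℂ → ℂ) (z : ℂ) : ℂ :=
  z * wdz f z + (starRingEnd ℂ) z * wdzb f z

/-- `F : 𝕋 → ℂ` is absolutely continuous with angular derivative `Ḟ = Fd`,
i.e. `t ↦ F(e^{it})` is an indefinite integral of the (locally integrable,
2π-periodic) function `Fd`. -/
def IsACDeriv (F : ℂ → ℂ) (Fd : ℝ → ℂ) : Prop :=
  (∀ a b : ℝ, IntervalIntegrable Fd MeasureTheory.volume a b) ∧
  Function.Periodic Fd (2 * π) ∧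
  ∀ t : ℝ, F (Complex.exp ((t : ℂ) * Complex.I)) = F 1 + ∫ s in (0:ℝ)..t, Fd s

/-- membership in `L^p(𝕋)`, identifying `𝕋` with `[0, 2π)`. -/
def MemLpT (p : ℝ≥0∞) (φ : ℝ → ℂ) : Prop :=
  MeasureTheory.MemLp φ p (MeasureTheory.volume.restrict (Ioc (0:ℝ) (2 * π)))

/-- The integral mean `M_p(r, g)`. -/
def Mp (p : ℝ) (g : ℂ → ℂ) (r : ℝ) : ℝ :=
  ((1 / (2 * π)) * ∫ θ in (0:ℝ)..(2 * π),
      ‖g ((r : ℂ) * Complex.exp ((θ : ℂ) * Complex.I))‖ ^ p) ^ (1 / p)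

/-- The `L^p(𝕋)` norm `((1/2π) ∫ |φ|^p)^{1/p}`. -/
def lpNormT (p : ℝ) (φ : ℝ → ℂ) : ℝ :=
  ((1 / (2 * π)) * ∫ t in (0:ℝ)..(2 * π), ‖φ t‖ ^ p) ^ (1 / p)

/-- Membership in the analytic Hardy space `H^p(𝔻)` for `p ∈ [1, ∞)`. -/
def MemHp (p : ℝ) (g : ℂ → ℂ) : Prop :=
  DifferentiableOn ℂ g (ball (0:ℂ) 1) ∧ ∃ M : ℝ, ∀ r ∈ Ioo (0:ℝ) 1, Mp p g r ≤ M

/-- Membership in `H^∞(𝔻)`: bounded analytic functions on the unit disk. -/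
def MemHinf (g : ℂ → ℂ) : Prop :=
  DifferentiableOn ℂ g (ball (0:ℂ) 1) ∧ ∃ M : ℝ, ∀ z ∈ ball (0:ℂ) 1, ‖g z‖ ≤ M

/-- Harmonicity on the unit disk: `f` is C² with vanishing Laplacian. -/
def HarmonicOnD (f : ℂ → ℂ) : Prop :=
  ContDiffOn ℝ 2 f (ball (0:ℂ) 1) ∧
  ∀ z ∈ ball (0:ℂ) 1,
    fderiv ℝ (fun w => fderiv ℝ f w 1) z 1
      + fderiv ℝ (fun w => fderiv ℝ f w Complex.I) z Complex.I = 0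

/-- Membership in the harmonic Hardy space `h^p(𝔻)` for `p ∈ [1, ∞)`. -/
def Memhp (p : ℝ) (g : ℂ → ℂ) : Prop :=
  HarmonicOnD g ∧ ∃ M : ℝ, ∀ r ∈ Ioo (0:ℝ) 1, Mp p g r ≤ M

/-- Membership in `h^∞(𝔻)`: bounded harmonic functions on the unit disk. -/
def Memhinf (g : ℂ → ℂ) : Prop :=
  HarmonicOnD g ∧ ∃ M : ℝ, ∀ z ∈ ball (0:ℂ) 1, ‖g z‖ ≤ M

/-- `L` is the value of the principal-value Hilbert transform
`(1/2π) p.v. ∫ φ(t)/tan((θ-t)/2) dt` of (the 2π-periodic) `φ` at `θ`. -/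
def IsPVHilbert (φ : ℝ → ℂ) (θ : ℝ) (L : ℂ) : Prop :=
  Filter.Tendsto
    (fun ε : ℝ => (1 / (2 * π)) *
      ∫ t in Ioo (θ - π) (θ + π) \ Ioo (θ - ε) (θ + ε),
        φ t / (Real.tan ((θ - t) / 2) : ℂ))
    (nhdsWithin 0 (Ioi 0)) (nhds L)

def Nice (φ : ℝ → ℂ) (M : ℝ) : Prop :=
  Function.Periodic φ (2 * π) ∧ AEStronglyMeasurable φ volume ∧ ∀ t, ‖φ t‖ ≤ M

def hk (z : ℂ) (t : ℝ) : ℂ :=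
  (1 + z * Complex.exp (-(t : ℂ) * Complex.I)) / (1 - z * Complex.exp (-(t : ℂ) * Complex.I))

def AA (φ : ℝ → ℂ) (z : ℂ) : ℂ :=
  (1 / (2 * π)) * ∫ t in (0:ℝ)..(2 * π), hk z t * φ t

def cj (φ : ℝ → ℂ) : ℝ → ℂ := fun t => (starRingEnd ℂ) (φ t)

lemma Nice.cj {φ : ℝ → ℂ} {M : ℝ} (h : Nice φ M) : Nice (cj φ) M := by
  refine ⟨fun t => ?_, ?_, fun t => ?_⟩
  · simp only [_root_.cj]; rw [h.1 t]
  · exact Complex.continuous_conj.comp_aestronglyMeasurable h.2.1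
  · simp only [_root_.cj, RCLike.norm_conj]; exact h.2.2 t

lemma Nice.ii {φ : ℝ → ℂ} {M : ℝ} (h : Nice φ M) (a b : ℝ) :
    IntervalIntegrable φ volume a b := by
  rw [intervalIntegrable_iff]
  exact Measure.integrableOn_of_bounded (M := M) (by simp) h.2.1 (ae_of_all _ h.2.2)

lemma norm_zexp (z : ℂ) (t : ℝ) : ‖z * Complex.exp (-(t : ℂ) * Complex.I)‖ = ‖z‖ := by
  have := Complex.norm_exp_ofReal_mul_I (-t)
  push_cast at this
  rw [norm_mul, this, mul_one]

lemma den_ne {z : ℂ} (hz : z ∈ ball (0:ℂ) 1) (t : ℝ) :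
    1 - z * Complex.exp (-(t : ℂ) * Complex.I) ≠ 0 := by
  intro h
  have h1 := norm_zexp z t
  rw [← sub_eq_zero.mp h] at h1
  simp at hz h1
  linarith

lemma hk_cont {z : ℂ} (hz : z ∈ ball (0:ℂ) 1) : Continuous (hk z) := by
  unfold hk
  exact Continuous.div (by fun_prop) (by fun_prop) (den_ne hz)

lemma hk_per (z : ℂ) : Function.Periodic (hk z) (2 * π) := by
  intro t
  have : Complex.exp (-((t + 2 * π : ℝ) : ℂ) * Complex.I)
      = Complex.exp (-(t : ℂ) * Complex.I) := by
    rw [← Complex.exp_periodic.sub_eq (-(t : ℂ) * Complex.I)]; push_cast; ring_nf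
  simp only [hk, this]

lemma hk_rot (z : ℂ) (θ t : ℝ) : hk (z * Complex.exp ((θ : ℂ) * Complex.I)) (t + θ) = hk z t := by
  have : z * Complex.exp ((θ : ℂ) * Complex.I) * Complex.exp (-((t + θ : ℝ) : ℂ) * Complex.I)
      = z * Complex.exp (-(t : ℂ) * Complex.I) := by
    rw [mul_assoc, ← Complex.exp_add]; push_cast; ring_nf
  simp only [hk, this]

lemma hk_re (z : ℂ) (t : ℝ) :
    (hk z t).re = poissonKer (z * Complex.exp (-(t : ℂ) * Complex.I)) := by
  unfold hk poissonKer
  generalize z * Complex.exp (-(t : ℂ) * Complex.I) = w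
  rw [div_re, ← Complex.normSq_eq_norm_sq, ← Complex.normSq_eq_norm_sq, ← add_div]
  congr 1
  simp [Complex.normSq_apply]; ring

lemma hk_im (z : ℂ) (t : ℝ) :
    (hk z t).im = conjPoissonKer (z * Complex.exp (-(t : ℂ) * Complex.I)) := rfl

lemma hk_mul_ii {z : ℂ} (hz : z ∈ ball (0:ℂ) 1) {φ : ℝ → ℂ} {a b : ℝ}
    (h : IntervalIntegrable φ volume a b) :
    IntervalIntegrable (fun t => hk z t * φ t) volume a b :=
  h.continuousOn_mul (hk_cont hz).continuousOn

lemma chk_mul_ii {z : ℂ} (hz : z ∈ ball (0:ℂ) 1) {φ : ℝ → ℂ} {a b : ℝ}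
    (h : IntervalIntegrable φ volume a b) :
    IntervalIntegrable (fun t => (starRingEnd ℂ) (hk z t) * φ t) volume a b :=
  h.continuousOn_mul (Complex.continuous_conj.comp (hk_cont hz)).continuousOn

lemma AA_conj (φ : ℝ → ℂ) (z : ℂ) : (starRingEnd ℂ) (AA (cj φ) z)
    = (1 / (2 * π)) * ∫ t in (0:ℝ)..(2 * π), (starRingEnd ℂ) (hk z t) * φ t := by
  unfold AA cj
  rw [map_mul, intervalIntegral.integral_of_le (by positivity),
    intervalIntegral.integral_of_le (by positivity), ← integral_conj]
  simp [Complex.conj_ofReal, show (starRingEnd ℂ) 2 = 2 from Complex.conj_ofReal 2]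

lemma pois_eq {z : ℂ} (hz : z ∈ ball (0:ℂ) 1) {φ : ℝ → ℂ}
    (h : IntervalIntegrable φ volume 0 (2 * π)) :
    poissonIntR φ z = (AA φ z + (starRingEnd ℂ) (AA (cj φ) z)) / 2 := by
  rw [AA_conj]
  unfold AA poissonIntR
  rw [← mul_add, ← intervalIntegral.integral_add (hk_mul_ii hz h)
    (chk_mul_ii hz h), mul_div_assoc]
  congr 1
  rw [div_eq_mul_inv, ← intervalIntegral.integral_mul_const]
  congr 1; ext t
  rw [← hk_re, ← add_mul, Complex.add_conj]; push_cast; ring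

lemma cpois_eq {z : ℂ} (hz : z ∈ ball (0:ℂ) 1) {φ : ℝ → ℂ}
    (h : IntervalIntegrable φ volume 0 (2 * π)) :
    conjPoissonIntR φ z = (AA φ z - (starRingEnd ℂ) (AA (cj φ) z)) / (2 * I) := by
  rw [AA_conj]
  unfold AA conjPoissonIntR
  rw [← mul_sub, ← intervalIntegral.integral_sub (hk_mul_ii hz h)
    (chk_mul_ii hz h), mul_div_assoc]
  congr 1
  rw [div_eq_mul_inv, ← intervalIntegral.integral_mul_const]
  congr 1; ext t
  rw [← hk_im, ← sub_mul, Complex.sub_conj]; push_cast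
  have := Complex.I_ne_zero
  field_simp

lemma arg_per {φ : ℝ → ℂ} (h : Function.Periodic φ (2 * π)) (t : ℝ) :
    φ (arg (circleMap 0 1 t)) = φ t := by
  have : circleMap 0 1 t = Complex.exp (t * I) := by simp [circleMap]
  rw [this, Complex.arg_exp_mul_I]
  exact h.sub_zsmul_eq _

lemma AA_diff {φ : ℝ → ℂ} {M : ℝ} (h : Nice φ M) : DifferentiableOn ℂ (AA φ) (ball 0 1) := by
  have hc : CircleIntegrable (fun ζ => φ (arg ζ)) 0 1 := by
    unfold CircleIntegrable
    simp only [arg_per h.1]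
    exact h.ii _ _
  have := differentiableOn_circleAverage_herglotzRieszKernel_smul hc
  refine this.congr fun z _ => ?_
  unfold AA
  rw [Real.circleAverage_def]
  simp only [arg_per h.1]
  rw [Complex.real_smul]
  push_cast
  rw [one_div]
  congr 2; ext t
  rw [herglotzRieszKernel_def, smul_eq_mul]
  congr 1
  have e : circleMap 0 1 t = Complex.exp (t * I) := by simp [circleMap]
  unfold hk
  have e1 : Complex.exp (-(t:ℂ) * I) = (Complex.exp (t * I))⁻¹ := by
    rw [← Complex.exp_neg]; ring_nf
  have e2 := Complex.exp_ne_zero (t * I)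
  rw [e, e1]; simp only [sub_zero]
  rw [← mul_div_mul_left _ _ e2]
  congr 1 <;> field_simp

lemma AA_zero (φ : ℝ → ℂ) : AA φ 0 = (1 / (2 * π)) * ∫ t in (0:ℝ)..(2 * π), φ t := by
  simp [AA, hk]

lemma per_shift {g : ℝ → ℂ} (h : Function.Periodic g (2 * π)) (θ : ℝ) :
    ∫ t in (0:ℝ)..(2 * π), g (t + θ) = ∫ t in (0:ℝ)..(2 * π), g t := by
  rw [intervalIntegral.integral_comp_add_right]
  have := h.intervalIntegral_add_eq θ 0
  simp only [zero_add] at this ⊢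
  rw [← this, add_comm]

lemma AA_rot {φ : ℝ → ℂ} (h : Function.Periodic φ (2 * π)) (z : ℂ) (θ : ℝ) :
    AA φ (z * Complex.exp ((θ : ℂ) * Complex.I))
      = (1 / (2 * π)) * ∫ t in (0:ℝ)..(2 * π), hk z t * φ (t + θ) := by
  unfold AA
  rw [← per_shift (θ := θ)]
  · simp only [hk_rot]
  · intro t; dsimp only; rw [h t, hk_per _ t]

lemma rot_mem {z : ℂ} (hz : z ∈ ball (0:ℂ) 1) (θ : ℝ) :
    z * Complex.exp ((θ : ℂ) * Complex.I) ∈ ball (0:ℂ) 1 := by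
  simpa [Complex.norm_exp_ofReal_mul_I] using hz

lemma AA_rot_cont {φ : ℝ → ℂ} {M : ℝ} (h : Nice φ M) {z : ℂ} (hz : z ∈ ball (0:ℂ) 1) :
    Continuous (fun θ : ℝ => AA φ (z * Complex.exp ((θ : ℂ) * Complex.I))) :=
  (AA_diff h).continuousOn.comp_continuous (by fun_prop) (rot_mem hz)

lemma AA_fubini {φ G : ℝ → ℂ} {M N : ℝ} (h : Nice φ M) (hG : Nice G N)
    (hd : ∀ t θ, G (t + θ) - G t = ∫ s in (0:ℝ)..θ, φ (t + s)) {z : ℂ} (hz : z ∈ ball (0:ℂ) 1)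
    (θ : ℝ) : AA G (z * Complex.exp ((θ : ℂ) * Complex.I)) - AA G z =
      ∫ s in (0:ℝ)..θ, AA φ (z * Complex.exp ((s : ℂ) * Complex.I)) := by
  rw [AA_rot hG.1]
  simp only [AA_rot h.1]
  have hcG : IntervalIntegrable (fun t => G (t + θ)) volume 0 (2 * π) := by
    have := (hG.ii (0 + θ) (2 * π + θ)).comp_add_right θ
    simpa using this
  unfold AA
  rw [← mul_sub, ← intervalIntegral.integral_sub (hk_mul_ii hz hcG) (hk_mul_ii hz (hG.ii _ _)),
    intervalIntegral.integral_const_mul]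
  congr 1
  simp only [← mul_sub, hd, ← intervalIntegral.integral_const_mul]
  rw [intervalIntegral.integral_of_le (b := 2 * π) (by positivity)]
  simp only [intervalIntegral.integral_of_le (show (0:ℝ) ≤ 2 * π by positivity)]
  rw [intervalIntegral_integral_swap]
  obtain ⟨C, hC⟩ : ∃ C, ∀ t ∈ Icc (0:ℝ) (2 * π), ‖hk z t‖ ≤ C :=
    isCompact_Icc.exists_bound_of_continuousOn (hk_cont hz).continuousOn
  have : IsFiniteMeasure (volume.restrict (uIoc 0 θ)) := ⟨by simp [uIoc]⟩
  refine Integrable.of_bound (C := C * M) ?_ ?_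
  · refine AEStronglyMeasurable.mul ?_ ?_
    · exact ((hk_cont hz).comp continuous_snd).aestronglyMeasurable
    · have q : Measure.QuasiMeasurePreserving (fun p : ℝ × ℝ => p.2 + p.1)
          (volume.prod volume) volume := by
        have := quasiMeasurePreserving_add (μ := (volume : Measure ℝ)) (ν := volume)
        simpa [add_comm] using this
      refine (h.2.1.comp_quasiMeasurePreserving q).mono_ac ?_
      rw [Measure.prod_restrict]
      exact Measure.restrict_le_self.absolutelyContinuous
  · rw [Measure.prod_restrict]
    refine (ae_restrict_iff' (measurableSet_uIoc.prod measurableSet_Ioc)).2 (ae_of_all _ ?_)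
    rintro ⟨s, t⟩ ⟨_, ht⟩
    simp only [Function.uncurry, norm_mul]
    have := hC t ⟨ht.1.le, ht.2⟩
    gcongr
    · exact (norm_nonneg _).trans this
    · exact h.2.2 _

lemma AA_deriv {φ G : ℝ → ℂ} {M N : ℝ} (h : Nice φ M) (hG : Nice G N)
    (hd : ∀ t θ, G (t + θ) - G t = ∫ s in (0:ℝ)..θ, φ (t + s)) {z : ℂ} (hz : z ∈ ball (0:ℂ) 1) :
    I * z * deriv (AA G) z = AA φ z := by
  have h1 : HasDerivAt (fun θ : ℝ => AA G (z * Complex.exp ((θ : ℂ) * Complex.I)))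
      (AA φ z) 0 := by
    have := (AA_rot_cont h hz).integral_hasStrictDerivAt 0 0
    have := this.hasDerivAt.add_const (AA G z)
    simp only [← AA_fubini h hG hd hz] at this
    simpa using this
  have h2 : HasDerivAt (fun θ : ℝ => AA G (z * Complex.exp ((θ : ℂ) * Complex.I)))
      (deriv (AA G) z * (z * I)) 0 := by
    have e : HasDerivAt (fun θ : ℝ => z * Complex.exp ((θ : ℂ) * Complex.I)) (z * I) 0 := by
      have := (((Complex.ofRealCLM.hasDerivAt (x := (0:ℝ))).mul_const I).cexp).const_mul z
      simpa using this
    have d : HasDerivAt (AA G) (deriv (AA G) z) (z * Complex.exp (((0:ℝ) : ℂ) * Complex.I)) := by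
      simp only [ofReal_zero, zero_mul, Complex.exp_zero, mul_one]
      exact ((AA_diff hG).differentiableAt (isOpen_ball.mem_nhds hz)).hasDerivAt
    exact HasDerivAt.comp (h₂ := AA G)
      (h := fun θ : ℝ => z * Complex.exp ((θ : ℂ) * Complex.I)) (0:ℝ) d e
  rw [← h2.unique h1]; ring

def Hc (ε : ℝ) (φ : ℝ → ℂ) (θ : ℝ) : ℂ := (1 / (2 * π)) *
      ∫ t in Ioo (θ - π) (θ + π) \ Ioo (θ - ε) (θ + ε),
        φ t / (Real.tan ((θ - t) / 2) : ℂ)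

def ct (s : ℝ) : ℝ := Real.cos (s / 2) / Real.sin (s / 2)

def SS (ε : ℝ) : Set ℝ := Ioo (-π) π \ Ioo (-ε) ε

lemma SS_meas (ε : ℝ) : MeasurableSet (SS ε) := measurableSet_Ioo.diff measurableSet_Ioo

lemma Hc_eq (ε : ℝ) (φ : ℝ → ℂ) (θ : ℝ) :
    Hc ε φ θ = (1 / (2 * π)) * ∫ s in SS ε, (ct s : ℂ) * φ (θ - s) := by
  unfold Hc
  congr 1
  have mp := Measure.measurePreserving_sub_left (volume : Measure ℝ) θ
  have := mp.setIntegral_preimage_emb (MeasurableEquiv.subLeft θ).measurableEmbedding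
    (fun t => φ t / (Real.tan ((θ - t) / 2) : ℂ)) (Ioo (θ - π) (θ + π) \ Ioo (θ - ε) (θ + ε))
  rw [← this]
  have e : (fun x => θ - x) ⁻¹' (Ioo (θ - π) (θ + π) \ Ioo (θ - ε) (θ + ε)) = SS ε := by
    ext s
    simp only [SS, mem_preimage, Set.mem_sdiff, mem_Ioo]
    constructor
    · rintro ⟨⟨h1, h2⟩, h3⟩
      exact ⟨⟨by linarith, by linarith⟩, fun h => h3 ⟨by linarith [h.2], by linarith [h.1]⟩⟩
    · rintro ⟨⟨h1, h2⟩, h3⟩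
      exact ⟨⟨by linarith, by linarith⟩, fun h => h3 ⟨by linarith [h.2], by linarith [h.1]⟩⟩
  rw [e]
  congr 1; ext s
  rw [sub_sub_cancel, Real.tan_eq_sin_div_cos, ct]
  push_cast
  rw [div_div_eq_mul_div, mul_div_assoc, mul_comm]

lemma abs_sin_half {s : ℝ} (hs : s ∈ Ioo (-π) π) : |s| / π ≤ |Real.sin (s / 2)| := by
  have := Real.mul_abs_le_abs_sin (x := s / 2) (by
    rw [abs_div, abs_of_pos (zero_lt_two' ℝ)]
    have := abs_lt.2 ⟨hs.1, hs.2⟩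
    linarith)
  refine le_trans (le_of_eq ?_) this
  rw [abs_div, abs_of_pos (zero_lt_two' ℝ)]
  field_simp

lemma SS_abs {ε s : ℝ} (hs : s ∈ SS ε) : ε ≤ |s| := by
  by_contra h
  push Not at h
  exact hs.2 (abs_lt.1 h)

lemma sin_half_ge {ε s : ℝ} (hs : s ∈ SS ε) : ε / π ≤ |Real.sin (s / 2)| := by
  refine le_trans ?_ (abs_sin_half hs.1)
  have := SS_abs hs
  gcongr

lemma ct_bound {ε s : ℝ} (hε : 0 < ε) (hs : s ∈ SS ε) : |ct s| ≤ π / ε := by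
  have h := sin_half_ge hs
  have h0 : 0 < ε / π := by positivity
  rw [ct, abs_div, div_le_div_iff₀ (by linarith) hε]
  have := Real.abs_cos_le_one (s / 2)
  calc _ ≤ 1 * ε := by gcongr
    _ = π * (ε / π) := by field_simp
    _ ≤ _ := by gcongr

lemma nsq (r s : ℝ) : ‖1 - (r : ℂ) * Complex.exp ((s : ℂ) * I)‖ ^ 2
    = (1 - r) ^ 2 + 4 * r * Real.sin (s / 2) ^ 2 := by
  rw [← Complex.normSq_eq_norm_sq, Complex.normSq_apply, Complex.exp_mul_I,
    ← Complex.ofReal_cos, ← Complex.ofReal_sin]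
  simp only [sub_re, one_re, re_ofReal_mul, add_re, ofReal_re, mul_re, I_re, mul_zero, ofReal_im,
    I_im, mul_one, sub_self, add_zero, sub_im, one_im, im_ofReal_mul, add_im, mul_im, zero_add]
  have e : s = 2 * (s / 2) := by ring
  have h1 : Real.cos s = 2 * Real.cos (s / 2) ^ 2 - 1 := by
    conv_lhs => rw [e, Real.cos_two_mul]
  have h2 := Real.sin_sq_add_cos_sq s
  have h3 := Real.sin_sq_add_cos_sq (s / 2)
  have h4 : Real.cos s = 1 - 2 * Real.sin (s / 2) ^ 2 := by linarith
  have : (1 - r) ^ 2 + 4 * r * Real.sin (s / 2) ^ 2 = 1 - 2 * r * Real.cos s + r ^ 2 := by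
    rw [h4]; ring
  rw [this]
  linear_combination r ^ 2 * h2

lemma pk_eq (r s : ℝ) : poissonKer ((r : ℂ) * Complex.exp ((s : ℂ) * I))
    = (1 - r ^ 2) / ((1 - r) ^ 2 + 4 * r * Real.sin (s / 2) ^ 2) := by
  unfold poissonKer
  rw [nsq, norm_mul, Complex.norm_exp_ofReal_mul_I]
  simp

lemma qk_eq (r s : ℝ) : conjPoissonKer ((r : ℂ) * Complex.exp ((s : ℂ) * I))
    = (2 * r * Real.sin s) / ((1 - r) ^ 2 + 4 * r * Real.sin (s / 2) ^ 2) := by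
  unfold conjPoissonKer
  rw [← nsq, ← Complex.normSq_eq_norm_sq, Complex.div_im, ← sub_div]
  congr 1
  rw [Complex.exp_mul_I, ← Complex.ofReal_cos, ← Complex.ofReal_sin]
  simp [-Complex.ofReal_sin, -Complex.ofReal_cos]
  ring

lemma ker_diff {ε s : ℝ} (h0 : 0 < ε) (h1 : ε < 1) (hs : s ∈ Ioo (-π) π) :
    |(SS ε).indicator ct s - conjPoissonKer (((1 - ε : ℝ) : ℂ) * Complex.exp ((s : ℂ) * I))|
      ≤ π * poissonKer (((1 - ε : ℝ) : ℂ) * Complex.exp ((s : ℂ) * I)) := by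
  rw [pk_eq, qk_eq]
  have hπ := Real.pi_gt_three
  set D := (1 - (1 - ε)) ^ 2 + 4 * (1 - ε) * Real.sin (s / 2) ^ 2 with hD
  have hDp : 0 < D := by
    have : 0 ≤ 4 * (1 - ε) * Real.sin (s / 2) ^ 2 := by
      have : 0 < 1 - ε := by linarith
      positivity
    have : 0 < (1 - (1 - ε)) ^ 2 := by ring_nf; positivity
    linarith
  by_cases h : s ∈ SS ε
  · rw [indicator_of_mem h]
    have hσ := sin_half_ge h
    have hσ0 : 0 < |Real.sin (s / 2)| := lt_of_lt_of_le (by positivity) hσ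
    have hσn : Real.sin (s / 2) ≠ 0 := abs_pos.1 hσ0
    have e : s = 2 * (s / 2) := by ring
    have hs2 : Real.sin s = 2 * Real.sin (s / 2) * Real.cos (s / 2) := by
      conv_lhs => rw [e, Real.sin_two_mul]
    have key : ct s - 2 * (1 - ε) * Real.sin s / D
        = (Real.cos (s / 2) / Real.sin (s / 2)) * ε ^ 2 / D := by
      rw [ct, hs2]
      rw [eq_div_iff hDp.ne', sub_mul, div_mul_cancel₀ _ hDp.ne', hD]
      field_simp
      ring
    rw [key, abs_div, abs_of_pos hDp, mul_div_assoc']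
    gcongr
    have hb := ct_bound h0 h
    rw [ct] at hb
    rw [abs_mul, abs_of_pos (show 0 < ε ^ 2 by positivity)]
    calc _ ≤ π / ε * ε ^ 2 := by gcongr
      _ = π * ε := by field_simp
      _ ≤ _ := by gcongr; nlinarith
  · rw [indicator_of_notMem h, zero_sub, abs_neg, abs_div, abs_of_pos hDp, mul_div_assoc']
    gcongr
    have hs' : |s| ≤ ε := by
      by_contra hc
      push Not at hc
      refine h ⟨hs, fun hh => ?_⟩
      exact absurd (abs_lt.2 ⟨hh.1, hh.2⟩) (by linarith)
    have h3 : |Real.sin s| ≤ ε := Real.abs_sin_le_abs.trans hs'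
    rw [abs_mul, abs_mul, abs_of_pos (zero_lt_two' ℝ), abs_of_pos (by linarith : 0 < 1 - ε)]
    calc 2 * (1 - ε) * |Real.sin s| ≤ 2 * 1 * ε := by gcongr; linarith
      _ ≤ 3 * ε := by linarith
      _ ≤ π * ε := by gcongr
      _ ≤ _ := by gcongr; nlinarith

lemma pk_cont {z : ℂ} (hz : z ∈ ball (0:ℂ) 1) :
    Continuous (fun t : ℝ => poissonKer (z * Complex.exp (-(t : ℂ) * Complex.I))) := by
  simp only [← hk_re]
  exact Complex.continuous_re.comp (hk_cont hz)

lemma qk_cont {z : ℂ} (hz : z ∈ ball (0:ℂ) 1) :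
    Continuous (fun t : ℝ => conjPoissonKer (z * Complex.exp (-(t : ℂ) * Complex.I))) := by
  simp only [← hk_im]
  exact Complex.continuous_im.comp (hk_cont hz)

lemma pk_per (z : ℂ) :
    Function.Periodic (fun t : ℝ => poissonKer (z * Complex.exp (-(t : ℂ) * Complex.I)))
      (2 * π) := by
  simp only [← hk_re]
  intro t; dsimp only; rw [hk_per z t]

lemma qk_per (z : ℂ) :
    Function.Periodic (fun t : ℝ => conjPoissonKer (z * Complex.exp (-(t : ℂ) * Complex.I)))
      (2 * π) := by
  simp only [← hk_im]
  intro t; dsimp only; rw [hk_per z t]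

lemma pk_nonneg {z : ℂ} (hz : z ∈ ball (0:ℂ) 1) (t : ℝ) :
    0 ≤ poissonKer (z * Complex.exp (-(t : ℂ) * Complex.I)) := by
  unfold poissonKer
  rw [norm_zexp]
  simp at hz
  have : 0 ≤ 1 - ‖z‖ ^ 2 := by nlinarith [norm_nonneg z]
  positivity

lemma pk_int {z : ℂ} (hz : z ∈ ball (0:ℂ) 1) :
    ∫ t in (0:ℝ)..(2 * π), poissonKer (z * Complex.exp (-(t : ℂ) * Complex.I)) = 2 * π := by
  have h := (diffContOnCl_const (𝕜 := ℂ) (c := (1:ℂ))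
    (s := ball (0:ℂ) 1)).circleAverage_poissonKernel_smul' hz
  rw [Real.circleAverage_def] at h
  have e : ∀ t : ℝ, ((‖circleMap 0 1 t - 0‖ ^ 2 - ‖z - 0‖ ^ 2) /
      ‖(circleMap 0 1 t - 0) - (z - 0)‖ ^ 2) • (1:ℂ) =
      ((poissonKer (z * Complex.exp (-(t : ℂ) * Complex.I)) : ℝ) : ℂ) := by
    intro t
    have e0 : circleMap 0 1 t = Complex.exp (t * I) := by simp [circleMap]
    have e2 : ‖Complex.exp (t * I) - z‖ = ‖1 - z * Complex.exp (-(t : ℂ) * Complex.I)‖ := by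
      have e3 : Complex.exp (t * I) - z
          = Complex.exp (t * I) * (1 - z * Complex.exp (-(t : ℂ) * Complex.I)) := by
        have : Complex.exp (t * I) * Complex.exp (-(t : ℂ) * Complex.I) = 1 := by
          rw [← Complex.exp_add]; simp
        linear_combination (z) * this
      rw [e3, norm_mul, Complex.norm_exp_ofReal_mul_I, one_mul]
    rw [e0, sub_zero, sub_zero, e2, Complex.norm_exp_ofReal_mul_I, Complex.real_smul, poissonKer,
      norm_zexp]
    simp
  simp only [e] at h
  rw [intervalIntegral.integral_ofReal, Complex.real_smul] at h
  have h2 : (2 * π)⁻¹ * ∫ t in (0:ℝ)..(2 * π),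
    poissonKer (z * Complex.exp (-(t : ℂ) * Complex.I)) = 1 := by exact_mod_cast h
  have : 0 < 2 * π := by positivity
  rwa [inv_mul_eq_iff_eq_mul₀ this.ne', mul_one] at h2

lemma pois_bound {z : ℂ} (hz : z ∈ ball (0:ℂ) 1) {φ : ℝ → ℂ} {M : ℝ}
    (h : ∀ᵐ t ∂(volume.restrict (Ioc 0 (2 * π))), ‖φ t‖ ≤ M) : ‖poissonIntR φ z‖ ≤ M := by
  have hp : 0 < 2 * π := by positivity
  have : ‖∫ t in (0:ℝ)..(2 * π), (poissonKer (z * Complex.exp (-(t : ℂ) * Complex.I)) : ℂ) * φ t‖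
      ≤ ∫ t in (0:ℝ)..(2 * π), poissonKer (z * Complex.exp (-(t : ℂ) * Complex.I)) * M := by
    refine intervalIntegral.norm_integral_le_of_norm_le hp.le ?_
      (((pk_cont hz).mul continuous_const).intervalIntegrable _ _)
    filter_upwards [(ae_restrict_iff' measurableSet_Ioc).1 h] with t ht ht'
    rw [norm_mul, Complex.norm_real, Real.norm_of_nonneg (pk_nonneg hz t)]
    exact mul_le_mul_of_nonneg_left (ht ht') (pk_nonneg hz t)
  rw [intervalIntegral.integral_mul_const, pk_int hz] at this
  unfold poissonIntR
  rw [norm_mul]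
  have e : ‖(1 / (2 * π) : ℂ)‖ = 1 / (2 * π) := by
    rw [show (1 / (2 * π) : ℂ) = ((1 / (2 * π) : ℝ) : ℂ) by push_cast; rfl, Complex.norm_real,
      Real.norm_of_nonneg (by positivity)]
  rw [e]
  calc _ ≤ 1 / (2 * π) * (2 * π * M) := by gcongr
    _ = M := by field_simp

lemma per_center {g : ℝ → ℂ} (h : Function.Periodic g (2 * π)) (θ : ℝ) :
    ∫ t in (0:ℝ)..(2 * π), g t = ∫ s in (-π)..π, g (θ - s) := by
  rw [intervalIntegral.integral_comp_sub_left]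
  have := h.intervalIntegral_add_eq 0 (θ - π)
  rw [zero_add] at this
  rw [this]
  congr 1 <;> ring

lemma per_center_real {g : ℝ → ℝ} (h : Function.Periodic g (2 * π)) (θ : ℝ) :
    ∫ t in (0:ℝ)..(2 * π), g t = ∫ s in (-π)..π, g (θ - s) := by
  rw [intervalIntegral.integral_comp_sub_left]
  have := h.intervalIntegral_add_eq 0 (θ - π)
  rw [zero_add] at this
  rw [this]
  congr 1 <;> ring

lemma rot_arg (r θ s : ℝ) : (r : ℂ) * Complex.exp ((θ : ℂ) * I) *
    Complex.exp (-((θ - s : ℝ) : ℂ) * I) = (r : ℂ) * Complex.exp ((s : ℂ) * I) := by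
  rw [mul_assoc, ← Complex.exp_add]; push_cast; ring_nf

lemma r_mem {r : ℝ} (h0 : 0 ≤ r) (h1 : r < 1) (θ : ℝ) :
    (r : ℂ) * Complex.exp ((θ : ℂ) * I) ∈ ball (0:ℂ) 1 := by
  simp [Complex.norm_exp_ofReal_mul_I, abs_of_nonneg h0, h1]

lemma exp_mem {r : ℝ} (h0 : 0 ≤ r) (h1 : r < 1) :
    (r : ℂ) ∈ ball (0:ℂ) 1 := by
  simp [abs_of_nonneg h0, h1]

lemma Nice.comp_sub {φ : ℝ → ℂ} {M : ℝ} (h : Nice φ M) (θ : ℝ) (μ : Measure ℝ)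
    (hμ : μ ≪ volume) : AEStronglyMeasurable (fun s => φ (θ - s)) μ :=
  (h.2.1.comp_measurePreserving (Measure.measurePreserving_sub_left volume θ)).mono_ac hμ

lemma Hc_sub {ε : ℝ} (h0 : 0 < ε) (h1 : ε < 1) {φ : ℝ → ℂ} {M : ℝ} (h : Nice φ M) (θ : ℝ) :
    ‖Hc ε φ θ - conjPoissonIntR φ (((1 - ε : ℝ) : ℂ) * Complex.exp ((θ : ℂ) * I))‖ ≤ π * M := by
  set r := 1 - ε with hr
  have hz := r_mem (r := r) (by linarith) (by linarith) θ
  have hp := Real.pi_pos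
  have hle : -π ≤ π := by linarith
  have hM : 0 ≤ M := (norm_nonneg _).trans (h.2.2 0)
  have e1 : conjPoissonIntR φ ((r : ℂ) * Complex.exp ((θ : ℂ) * I))
      = (1 / (2 * π)) * ∫ s in Ioc (-π) π,
        (conjPoissonKer ((r : ℂ) * Complex.exp ((s : ℂ) * I)) : ℂ) * φ (θ - s) := by
    unfold conjPoissonIntR
    rw [per_center (θ := θ), intervalIntegral.integral_of_le hle]
    · simp only [rot_arg]
    · intro t
      have := qk_per ((r : ℂ) * Complex.exp ((θ : ℂ) * I)) t
      dsimp only at this ⊢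
      rw [h.1 t, this]
  have e2 : Hc ε φ θ = (1 / (2 * π)) * ∫ s in Ioc (-π) π,
      (((SS ε).indicator ct s : ℝ) : ℂ) * φ (θ - s) := by
    rw [Hc_eq]
    congr 1
    have hsub : SS ε ⊆ Ioc (-π) π := fun s hs => ⟨hs.1.1, hs.1.2.le⟩
    rw [← inter_eq_self_of_subset_right hsub, ← setIntegral_indicator (SS_meas ε)]
    congr 1; ext s
    by_cases hs : s ∈ SS ε
    · rw [inter_eq_self_of_subset_right hsub, indicator_of_mem hs, indicator_of_mem hs]
    · rw [inter_eq_self_of_subset_right hsub, indicator_of_notMem hs, indicator_of_notMem hs]; simp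
  have m1 : AEStronglyMeasurable (fun s => φ (θ - s)) (volume.restrict (Ioc (-π) π)) :=
    h.comp_sub θ _ Measure.restrict_le_self.absolutelyContinuous
  have i1 : Integrable (fun s => (((SS ε).indicator ct s : ℝ) : ℂ) * φ (θ - s))
      (volume.restrict (Ioc (-π) π)) := by
    refine Integrable.of_bound (C := π / ε * M) (AEStronglyMeasurable.mul ?_ m1)
      (ae_of_all _ fun s => ?_)
    · refine Measurable.aestronglyMeasurable (Complex.measurable_ofReal.comp ?_)
      refine Measurable.indicator ?_ (SS_meas ε)
      unfold ct; fun_prop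
    · rw [norm_mul, Complex.norm_real]
      gcongr
      · by_cases hs : s ∈ SS ε
        · rw [indicator_of_mem hs]; exact ct_bound h0 hs
        · rw [indicator_of_notMem hs]; simp; positivity
      · exact h.2.2 _
  have rot0 : ∀ s : ℝ, (r : ℂ) * Complex.exp ((s : ℂ) * I)
      = (r : ℂ) * Complex.exp (-((-s : ℝ) : ℂ) * I) := by intro s; simp
  have hzr := exp_mem (r := r) (by linarith) (by linarith)
  have qc : Continuous fun s : ℝ => conjPoissonKer ((r : ℂ) * Complex.exp ((s : ℂ) * I)) := by
    simp only [rot0]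
    exact (qk_cont hzr).comp continuous_neg
  have pc : Continuous fun s : ℝ => poissonKer ((r : ℂ) * Complex.exp ((s : ℂ) * I)) := by
    simp only [rot0]
    exact (pk_cont hzr).comp continuous_neg
  have i2 : Integrable (fun s : ℝ => (conjPoissonKer ((r : ℂ) * Complex.exp ((s : ℂ) * I)) : ℂ) *
      φ (θ - s)) (volume.restrict (Ioc (-π) π)) := by
    obtain ⟨C, hC⟩ := isCompact_Icc.exists_bound_of_continuousOn (s := Icc (-π) π) qc.continuousOn
    refine Integrable.of_bound (C := C * M) (AEStronglyMeasurable.mul ?_ m1) ?_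
    · exact (Complex.continuous_ofReal.comp qc).aestronglyMeasurable
    · refine (ae_restrict_iff' measurableSet_Ioc).2 (ae_of_all _ fun s hs => ?_)
      have h3 := hC s ⟨hs.1.le, hs.2⟩
      rw [norm_mul, Complex.norm_real]
      gcongr
      · exact (norm_nonneg _).trans h3
      · exact h.2.2 _
  rw [e1, e2, ← mul_sub, ← integral_sub i1 i2, norm_mul]
  have e : ‖(1 / (2 * π) : ℂ)‖ = 1 / (2 * π) := by
    rw [show (1 / (2 * π) : ℂ) = ((1 / (2 * π) : ℝ) : ℂ) by push_cast; rfl, Complex.norm_real,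
      Real.norm_of_nonneg (by positivity)]
  have pI : ∫ s in Ioc (-π) π, poissonKer ((r : ℂ) * Complex.exp ((s : ℂ) * I)) = 2 * π := by
    rw [← pk_int hz, per_center_real (pk_per _) θ, intervalIntegral.integral_of_le hle]
    simp only [rot_arg]
  have fin : ‖∫ s in Ioc (-π) π, ((((SS ε).indicator ct s : ℝ) : ℂ) * φ (θ - s)
      - (conjPoissonKer ((r : ℂ) * Complex.exp ((s : ℂ) * I)) : ℂ) * φ (θ - s))‖
      ≤ ∫ s in Ioc (-π) π, π * poissonKer ((r : ℂ) * Complex.exp ((s : ℂ) * I)) * M := by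
    refine norm_integral_le_of_norm_le ?_ ?_
    · exact (((continuous_const.mul pc).mul continuous_const).integrableOn_Icc).mono_set
        Ioc_subset_Icc_self
    · rw [← Measure.restrict_congr_set (Ioo_ae_eq_Ioc (μ := volume))]
      refine (ae_restrict_iff' measurableSet_Ioo).2 (ae_of_all _ fun s hs => ?_)
      rw [← sub_mul, norm_mul, ← Complex.ofReal_sub, Complex.norm_real]
      have kd := ker_diff h0 h1 hs
      have := h.2.2 (θ - s)
      exact mul_le_mul kd this (norm_nonneg _) ((abs_nonneg _).trans kd)
  rw [integral_mul_const, integral_const_mul, pI] at fin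
  rw [e]
  calc _ ≤ 1 / (2 * π) * (π * (2 * π) * M) := by gcongr
    _ = π * M := by field_simp

lemma mean_zero_int {g : ℂ → ℂ} {z : ℂ} (hz : z ∈ ball (0:ℂ) 1)
    (hg : DifferentiableOn ℂ g (ball 0 1)) :
    ∫ t in (0:ℝ)..(2 * π), g (z * Complex.exp ((t : ℂ) * I)) = 2 * π * g 0 := by
  have hd : DiffContOnCl ℂ (fun ζ => g (z * ζ)) (ball 0 |1|) := by
    apply DifferentiableOn.diffContOnCl
    rw [abs_one, closure_ball _ one_ne_zero]
    refine hg.comp (by fun_prop) fun ζ hζ => ?_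
    simp at hζ hz ⊢
    nlinarith [norm_nonneg z, norm_nonneg ζ]
  have h := hd.circleAverage
  rw [Real.circleAverage_def] at h
  simp only [circleMap, ofReal_one, one_mul, zero_add, mul_zero, Complex.real_smul] at h
  rw [← h, ← mul_assoc]
  push_cast
  have : (π : ℂ) ≠ 0 := by exact_mod_cast Real.pi_ne_zero
  rw [mul_inv_cancel₀ (by simp), one_mul]

lemma Q_L2 {φ : ℝ → ℂ} {M : ℝ} (h : Nice φ M) (hm : ∫ t in (0:ℝ)..(2 * π), φ t = 0)
    {r : ℝ} (h0 : 0 ≤ r) (h1 : r < 1) :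
    ∫ θ in (0:ℝ)..(2 * π), ‖conjPoissonIntR φ ((r : ℂ) * Complex.exp ((θ : ℂ) * I))‖ ^ 2
      ≤ 2 * π * M ^ 2 := by
  have hr := exp_mem h0 h1
  have hA := mean_zero_int hr ((AA_diff h).mul (AA_diff h.cj))
  simp only [Pi.mul_apply] at hA
  rw [AA_zero φ, hm] at hA
  simp only [mul_zero, zero_mul] at hA
  have cA := AA_rot_cont h hr
  have cB := AA_rot_cont h.cj hr
  have key : ∀ a b : ℂ, ‖(a - (starRingEnd ℂ) b) / (2 * I)‖ ^ 2
      = ‖(a + (starRingEnd ℂ) b) / 2‖ ^ 2 - (a * b).re := by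
    intro a b
    simp only [← Complex.normSq_eq_norm_sq, Complex.normSq_div, Complex.normSq_mul,
      Complex.normSq_I]
    simp [Complex.normSq_apply]
    ring
  have e : ∀ θ : ℝ, ‖conjPoissonIntR φ ((r : ℂ) * Complex.exp ((θ : ℂ) * I))‖ ^ 2
      = ‖poissonIntR φ ((r : ℂ) * Complex.exp ((θ : ℂ) * I))‖ ^ 2 -
        (AA φ ((r : ℂ) * Complex.exp ((θ : ℂ) * I)) *
          AA (cj φ) ((r : ℂ) * Complex.exp ((θ : ℂ) * I))).re := by
    intro θ
    have hz := r_mem h0 h1 θ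
    rw [cpois_eq hz (h.ii _ _), pois_eq hz (h.ii _ _), key]
  have cP : Continuous (fun θ : ℝ => ‖poissonIntR φ ((r : ℂ) * Complex.exp ((θ : ℂ) * I))‖ ^ 2) := by
    have : (fun θ : ℝ => poissonIntR φ ((r : ℂ) * Complex.exp ((θ : ℂ) * I))) = fun θ : ℝ =>
        (AA φ ((r : ℂ) * Complex.exp ((θ : ℂ) * I)) + (starRingEnd ℂ)
          (AA (cj φ) ((r : ℂ) * Complex.exp ((θ : ℂ) * I)))) / 2 := by
      ext θ; rw [pois_eq (r_mem h0 h1 θ) (h.ii _ _)]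
    have c2 : Continuous (fun θ : ℝ => poissonIntR φ ((r : ℂ) * Complex.exp ((θ : ℂ) * I))) := by
      rw [this]
      exact (cA.add (Complex.continuous_conj.comp cB)).div_const _
    exact c2.norm.pow 2
  have cR : Continuous (fun θ : ℝ => (AA φ ((r : ℂ) * Complex.exp ((θ : ℂ) * I)) *
          AA (cj φ) ((r : ℂ) * Complex.exp ((θ : ℂ) * I))).re) :=
    Complex.continuous_re.comp (cA.mul cB)
  simp only [e]
  rw [intervalIntegral.integral_sub (cP.intervalIntegrable _ _) (cR.intervalIntegrable _ _)]
  have z0 : ∫ θ in (0:ℝ)..(2 * π), (AA φ ((r : ℂ) * Complex.exp ((θ : ℂ) * I)) *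
          AA (cj φ) ((r : ℂ) * Complex.exp ((θ : ℂ) * I))).re = 0 := by
    have := Complex.reCLM.intervalIntegral_comp_comm
      ((cA.mul cB).intervalIntegrable (μ := volume) 0 (2 * π))
    simp only [Complex.reCLM_apply, Pi.mul_apply] at this
    rw [this, hA]; simp
  rw [z0, sub_zero]
  have hp : (0:ℝ) ≤ 2 * π := by positivity
  calc _ ≤ ∫ θ in (0:ℝ)..(2 * π), M ^ 2 := by
        refine intervalIntegral.integral_mono_on hp (cP.intervalIntegrable _ _) (by simp) ?_
        intro θ _
        have := pois_bound (r_mem h0 h1 θ) (ae_of_all _ h.2.2)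
        gcongr
    _ = 2 * π * M ^ 2 := by simp

lemma ct_meas : Measurable ct := by unfold ct; fun_prop

lemma SS_fin (ε : ℝ) : IsFiniteMeasure (volume.restrict (SS ε)) :=
  ⟨by
    rw [Measure.restrict_apply_univ]
    exact (measure_mono (fun s hs => hs.1)).trans_lt (by simp : volume (Ioo (-π) π) < ⊤)⟩

lemma pois_Hc {φ : ℝ → ℂ} {M : ℝ} (h : Nice φ M) {ε : ℝ} (h0 : 0 < ε)
    {z : ℂ} (hz : z ∈ ball (0:ℂ) 1) : poissonIntR (Hc ε φ) z =
      (1 / (2 * π)) * ∫ s in SS ε, (ct s : ℂ) *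
        poissonIntR φ (z * Complex.exp ((-s : ℝ) * I)) := by
  have inner : ∀ s : ℝ, poissonIntR φ (z * Complex.exp ((-s : ℝ) * I)) = (1 / (2 * π)) *
      ∫ t in (0:ℝ)..(2 * π), (poissonKer (z * Complex.exp (-(t : ℂ) * Complex.I)) : ℂ) *
        φ (t - s) := by
    intro s
    unfold poissonIntR
    rw [← per_shift (θ := -s)]
    · congr 2; ext t
      rw [← sub_eq_add_neg]
      congr 3
      rw [mul_assoc, ← Complex.exp_add]; push_cast; ring_nf
    · intro t
      have := pk_per (z * Complex.exp ((-s : ℝ) * I)) t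
      dsimp only at this ⊢
      rw [h.1 t, this]
  simp only [inner]
  unfold poissonIntR
  simp only [Hc_eq]
  have : ∀ t : ℝ, (poissonKer (z * Complex.exp (-(t : ℂ) * Complex.I)) : ℂ) * (1 / (2 * π) *
      ∫ s in SS ε, (ct s : ℂ) * φ (t - s)) = 1 / (2 * π) * ∫ s in SS ε,
      (poissonKer (z * Complex.exp (-(t : ℂ) * Complex.I)) : ℂ) * ((ct s : ℂ) * φ (t - s)) := by
    intro t
    rw [integral_const_mul]; ring
  simp only [this]
  rw [intervalIntegral.integral_const_mul, intervalIntegral_integral_swap]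
  · congr 1
    rw [← integral_const_mul]
    congr 1; ext s
    rw [← mul_assoc, mul_comm (ct s : ℂ) (1 / (2 * π)), mul_assoc]
    congr 1
    rw [← intervalIntegral.integral_const_mul]
    congr 1; ext t; ring
  · have f1 : IsFiniteMeasure (volume.restrict (uIoc 0 (2 * π))) := ⟨by simp [uIoc]⟩
    have f2 := SS_fin ε
    obtain ⟨C, hC⟩ := (isCompact_uIcc (a := (0:ℝ)) (b := 2 * π)).exists_bound_of_continuousOn
      (pk_cont hz).continuousOn
    refine Integrable.of_bound (C := C * (π / ε * M)) ?_ ?_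
    · refine AEStronglyMeasurable.mul ?_ (AEStronglyMeasurable.mul ?_ ?_)
      · exact (Complex.continuous_ofReal.comp
          ((pk_cont hz).comp continuous_fst)).aestronglyMeasurable
      · exact (Complex.measurable_ofReal.comp (ct_meas.comp measurable_snd)).aestronglyMeasurable
      · have q : Measure.QuasiMeasurePreserving (fun p : ℝ × ℝ => p.1 - p.2)
            (volume.prod volume) volume := quasiMeasurePreserving_sub volume volume
        refine (h.2.1.comp_quasiMeasurePreserving q).mono_ac ?_
        rw [Measure.prod_restrict]
        exact Measure.restrict_le_self.absolutelyContinuous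
    · rw [Measure.prod_restrict]
      refine (ae_restrict_iff' (measurableSet_uIoc.prod (SS_meas ε))).2 (ae_of_all _ ?_)
      rintro ⟨t, s⟩ ⟨ht, hs⟩
      simp only [Function.uncurry, norm_mul, Complex.norm_real]
      have h3 := hC t (uIoc_subset_uIcc ht)
      have h4 := ct_bound h0 hs
      gcongr
      · exact (norm_nonneg _).trans h3
      · exact h4
      · exact h.2.2 _

def en (n : ℕ) : ℝ := 1 / ((n : ℝ) + 2)

lemma en_pos (n : ℕ) : 0 < en n := by unfold en; positivity

lemma en_lt (n : ℕ) : en n < 1 := by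
  unfold en; rw [div_lt_one (by positivity)]; have : (0:ℝ) ≤ n := by positivity
  linarith

lemma en_anti : Antitone en := by
  intro a b hab
  unfold en
  have : (a:ℝ) ≤ b := by exact_mod_cast hab
  gcongr

lemma en_tend : Tendsto en atTop (𝓝[>] 0) := by
  refine tendsto_nhdsWithin_iff.2 ⟨?_, Eventually.of_forall en_pos⟩
  have := tendsto_one_div_add_atTop_nhds_zero_nat (𝕜 := ℝ)
  have h2 := this.comp (tendsto_add_atTop_nat 1)
  refine h2.congr fun n => ?_
  simp [en]; ring

lemma SS_tend {g : ℝ → ℂ} (hg : Continuous g) :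
    Tendsto (fun n => ∫ s in SS (en n), g s) atTop (𝓝 (∫ s in (-π)..π, g s)) := by
  have hu : (⋃ n, SS (en n)) = Ioo (-π) π \ {0} := by
    ext s
    simp only [mem_iUnion]
    constructor
    · rintro ⟨n, hn⟩
      refine ⟨hn.1, fun h => hn.2 ?_⟩
      rw [mem_singleton_iff] at h
      rw [h]; exact ⟨by linarith [en_pos n], en_pos n⟩
    · rintro ⟨h1, h2⟩
      have : 0 < |s| := abs_pos.2 h2
      have := (en_tend.mono_right nhdsWithin_le_nhds).eventually (gt_mem_nhds this)
      obtain ⟨n, hn⟩ := this.exists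
      exact ⟨n, h1, fun h => by linarith [abs_lt.2 h]⟩
  have hi : IntegrableOn g (Ioc (-π) π) :=
    hg.integrableOn_Icc.mono_set Ioc_subset_Icc_self
  have := tendsto_setIntegral_of_monotone (μ := volume) (s := fun n => SS (en n)) (f := g)
    (fun n => SS_meas _)
    (by
      intro a b hab s hs
      refine ⟨hs.1, fun h => hs.2 ?_⟩
      have := en_anti hab
      exact ⟨by linarith [h.1], by linarith [h.2]⟩)
    (by rw [hu]; exact hi.mono_set fun s hs => Ioo_subset_Ioc_self hs.1)
  rw [hu] at this
  rw [intervalIntegral.integral_of_le (by linarith [Real.pi_pos])]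
  convert this using 2
  apply setIntegral_congr_set
  refine (Ioo_ae_eq_Ioc.symm).trans ?_
  exact (sdiff_null_ae_eq_self (by simp)).symm

lemma ct_odd (ε : ℝ) : ∫ s in SS ε, (ct s : ℂ) = 0 := by
  have mp := Measure.measurePreserving_neg (volume : Measure ℝ)
  have := mp.setIntegral_preimage_emb (MeasurableEquiv.neg ℝ).measurableEmbedding
    (fun t => (ct t : ℂ)) (SS ε)
  have e : (Neg.neg) ⁻¹' SS ε = SS ε := by
    ext s
    simp only [SS, mem_preimage, Set.mem_sdiff, mem_Ioo]
    constructor <;>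
    · rintro ⟨⟨h1, h2⟩, h3⟩
      exact ⟨⟨by linarith, by linarith⟩, fun h => h3 ⟨by linarith [h.2], by linarith [h.1]⟩⟩
  rw [e] at this
  have e2 : ∀ s, ct (-s) = - ct s := by intro s; simp [ct, neg_div, div_neg]
  simp only [e2, ofReal_neg, integral_neg] at this
  exact self_eq_neg.1 this.symm

lemma ct_slope {A : ℂ → ℂ} (z : ℂ) {s : ℝ} (hs : s ∈ Ioo (-π) π) (hs0 : s ≠ 0) :
    (ct s : ℂ) * (A (z * Complex.exp ((-s : ℝ) * I)) - A z)
      = -I * ((z + z * Complex.exp ((-s : ℝ) * I)) *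
        dslope A z (z * Complex.exp ((-s : ℝ) * I))) := by
  set ζ := z * Complex.exp ((-s : ℝ) * I) with hζ
  have hsub := sub_smul_dslope A z ζ
  rw [← hsub, smul_eq_mul, ← mul_assoc, ← mul_assoc]
  congr 1
  have hsin : Real.sin (s / 2) ≠ 0 := by
    have := abs_sin_half hs
    have h2 : 0 < |s| / π := div_pos (abs_pos.2 hs0) Real.pi_pos
    exact abs_pos.1 (lt_of_lt_of_le h2 this)
  have hsin' : (Real.sin (s / 2) : ℂ) ≠ 0 := by exact_mod_cast hsin
  have e : Complex.exp ((-s : ℝ) * I)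
      = ((Real.cos (s / 2) : ℂ) - Real.sin (s / 2) * I) ^ 2 := by
    have : (((-s : ℝ) : ℂ) * I) = ((2 : ℕ) : ℂ) * ((-(s / 2) : ℝ) * I) := by push_cast; ring
    rw [this, Complex.exp_nat_mul, Complex.exp_mul_I, ← Complex.ofReal_cos, ← Complex.ofReal_sin,
      Real.cos_neg, Real.sin_neg]
    push_cast; ring
  have h1 : (Real.sin (s / 2) : ℂ) ^ 2 + (Real.cos (s / 2) : ℂ) ^ 2 = 1 := by
    exact_mod_cast Real.sin_sq_add_cos_sq (s / 2)
  rw [hζ, e, ct]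
  push_cast [-Complex.ofReal_sin, -Complex.ofReal_cos]
  generalize (Real.sin (s / 2) : ℂ) = σ at *
  generalize (Real.cos (s / 2) : ℂ) = c at *
  rw [div_mul_eq_mul_div, div_eq_iff hsin']
  have hI := Complex.I_sq
  linear_combination z * (c - σ * I) * h1 - z * (c - σ * I) * σ ^ 2 * hI

lemma T_lim {A : ℂ → ℂ} (hA : DifferentiableOn ℂ A (ball 0 1)) (hA0 : A 0 = 0)
    {z : ℂ} (hz : z ∈ ball (0:ℂ) 1) :
    Tendsto (fun n => (1 / (2 * π) : ℂ) *
      ∫ s in SS (en n), (ct s : ℂ) * A (z * Complex.exp ((-s : ℝ) * I))) atTop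
      (𝓝 (-I * A z)) := by
  set g : ℂ → ℂ := fun ζ => -I * ((z + ζ) * dslope A z ζ) with hg
  have hgd : DifferentiableOn ℂ g (ball 0 1) := by
    have : DifferentiableOn ℂ (dslope A z) (ball 0 1) :=
      (Complex.differentiableOn_dslope (isOpen_ball.mem_nhds hz)).2 hA
    exact ((differentiableOn_id.const_add z).mul this).const_mul _
  have hgc : Continuous (fun s : ℝ => g (z * Complex.exp ((-s : ℝ) * I))) :=
    hgd.continuousOn.comp_continuous (by fun_prop) fun s => rot_mem hz (-s)
  have hAc : Continuous (fun s : ℝ => A (z * Complex.exp ((-s : ℝ) * I))) :=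
    hA.continuousOn.comp_continuous (by fun_prop) fun s => rot_mem hz (-s)
  have lim := (SS_tend hgc).const_mul (1 / (2 * π) : ℂ)
  have e1 : ∫ s in (-π)..π, g (z * Complex.exp ((-s : ℝ) * I)) = 2 * π * g 0 := by
    rw [← mean_zero_int hz hgd, per_center (θ := 0)]
    · simp
    · intro t
      have : Complex.exp (((t + 2 * π : ℝ) : ℂ) * I) = Complex.exp ((t : ℂ) * I) := by
        rw [← Complex.exp_periodic ((t : ℂ) * I)]; push_cast; ring_nf
      dsimp only; rw [this]
  have e2 : g 0 = -I * A z := by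
    have := sub_smul_dslope A z 0
    rw [hA0, smul_eq_mul] at this
    simp only [hg, add_zero]
    linear_combination I * this
  have hp : (π : ℂ) ≠ 0 := by exact_mod_cast Real.pi_ne_zero
  rw [e1, e2, ← mul_assoc, show (1 / (2 * π) : ℂ) * (2 * π) = 1 by field_simp, one_mul] at lim
  refine lim.congr fun n => ?_
  congr 1
  have i0 : Integrable (fun s => (ct s : ℂ)) (volume.restrict (SS (en n))) := by
    have := SS_fin (en n)
    refine Integrable.of_bound (C := π / en n)
      (Complex.measurable_ofReal.comp ct_meas).aestronglyMeasurable ?_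
    refine (ae_restrict_iff' (SS_meas _)).2 (ae_of_all _ fun s hs => ?_)
    rw [Complex.norm_real]
    exact ct_bound (en_pos n) hs
  have i1 : Integrable (fun s : ℝ => (ct s : ℂ) * A (z * Complex.exp ((-s : ℝ) * I)))
      (volume.restrict (SS (en n))) := by
    obtain ⟨C, hC⟩ := (isCompact_Icc (a := -π) (b := π)).exists_bound_of_continuousOn
      hAc.continuousOn
    refine Integrable.mul_bdd (c := C) i0 hAc.aestronglyMeasurable ?_
    refine (ae_restrict_iff' (SS_meas _)).2 (ae_of_all _ fun s hs => ?_)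
    exact hC s (Ioo_subset_Icc_self hs.1)
  have : ∫ s in SS (en n), g (z * Complex.exp ((-s : ℝ) * I))
      = ∫ s in SS (en n), ((ct s : ℂ) * A (z * Complex.exp ((-s : ℝ) * I)) - (ct s : ℂ) * A z) := by
    refine setIntegral_congr_fun (SS_meas _) fun s hs => ?_
    have hs0 : s ≠ 0 := by
      intro h; have := SS_abs hs; rw [h, abs_zero] at this; linarith [en_pos n]
    rw [← mul_sub, ct_slope z hs.1 hs0]
  rw [this, integral_sub i1 (i0.mul_const _), integral_mul_const, ct_odd, zero_mul, sub_zero]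

lemma pois_Hc_lim {φ : ℝ → ℂ} {M : ℝ} (h : Nice φ M)
    (hm : ∫ t in (0:ℝ)..(2 * π), φ t = 0) {z : ℂ} (hz : z ∈ ball (0:ℂ) 1) :
    Tendsto (fun n => poissonIntR (Hc (en n) φ) z) atTop (𝓝 (conjPoissonIntR φ z)) := by
  have z1 : AA φ 0 = 0 := by rw [AA_zero, hm, mul_zero]
  have z2 : AA (cj φ) 0 = 0 := by
    rw [AA_zero]
    have : ∫ t in (0:ℝ)..(2 * π), cj φ t = (starRingEnd ℂ) (∫ t in (0:ℝ)..(2 * π), φ t) := by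
      rw [intervalIntegral.integral_of_le (by positivity),
        intervalIntegral.integral_of_le (by positivity), ← integral_conj]; rfl
    rw [this, hm]; simp
  have t1 := T_lim (AA_diff h) z1 hz
  have t2 := (Complex.continuous_conj.tendsto _).comp (T_lim (AA_diff h.cj) z2 hz)
  have t3 := (t1.add t2).div_const 2
  have e : (-I * AA φ z + (starRingEnd ℂ) (-I * AA (cj φ) z)) / 2 = conjPoissonIntR φ z := by
    rw [cpois_eq hz (h.ii _ _)]
    simp only [map_mul, map_neg, Complex.conj_I, neg_neg]
    rw [eq_div_iff (by simp)]
    linear_combination (-(AA φ z) + (starRingEnd ℂ) (AA (cj φ) z)) * Complex.I_sq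
  rw [e] at t3
  refine t3.congr fun n => ?_
  rw [pois_Hc h (en_pos n) hz]
  simp only [Function.comp_apply, map_mul]
  rw [← integral_conj]
  simp only [map_mul, Complex.conj_ofReal, map_div₀, map_one,
    show (starRingEnd ℂ) 2 = 2 from Complex.conj_ofReal 2]
  rw [← mul_add, mul_div_assoc]
  have i0 : Integrable (fun s => (ct s : ℂ)) (volume.restrict (SS (en n))) := by
    have := SS_fin (en n)
    refine Integrable.of_bound (C := π / en n)
      (Complex.measurable_ofReal.comp ct_meas).aestronglyMeasurable ?_
    refine (ae_restrict_iff' (SS_meas _)).2 (ae_of_all _ fun s hs => ?_)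
    rw [Complex.norm_real]
    exact ct_bound (en_pos n) hs
  have i1 : ∀ {g : ℝ → ℂ}, Continuous g → Integrable (fun s : ℝ => (ct s : ℂ) * g s)
      (volume.restrict (SS (en n))) := by
    intro g hg
    obtain ⟨C, hC⟩ := (isCompact_Icc (a := -π) (b := π)).exists_bound_of_continuousOn
      hg.continuousOn
    refine Integrable.mul_bdd (c := C) i0 hg.aestronglyMeasurable ?_
    refine (ae_restrict_iff' (SS_meas _)).2 (ae_of_all _ fun s hs => ?_)
    exact hC s (Ioo_subset_Icc_self hs.1)
  have j1 := i1 ((AA_rot_cont h hz).comp continuous_neg)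
  have j2 := i1 (Complex.continuous_conj.comp ((AA_rot_cont h.cj hz).comp continuous_neg))
  simp only [Function.comp_def] at j1 j2
  rw [← integral_add j1 j2]
  congr 1
  rw [div_eq_mul_inv, ← integral_mul_const]
  congr 1; ext s
  rw [pois_eq (rot_mem hz _) (h.ii _ _)]
  ring

lemma Hc_meas {φ : ℝ → ℂ} {M : ℝ} (h : Nice φ M) (ε : ℝ) :
    AEStronglyMeasurable (Hc ε φ) volume := by
  have e : Hc ε φ = fun θ => (1 / (2 * π)) * ∫ s in SS ε, (ct s : ℂ) * φ (θ - s) := by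
    ext θ; exact Hc_eq ε φ θ
  rw [e]
  refine AEStronglyMeasurable.const_mul ?_ _
  refine AEStronglyMeasurable.integral_prod_right' (f := fun p : ℝ × ℝ => (ct p.2 : ℂ) * φ (p.1 - p.2)) ?_
  refine AEStronglyMeasurable.mul ?_ ?_
  · exact (Complex.measurable_ofReal.comp (ct_meas.comp measurable_snd)).aestronglyMeasurable
  · have q : Measure.QuasiMeasurePreserving (fun p : ℝ × ℝ => p.1 - p.2)
            (volume.prod volume) volume := quasiMeasurePreserving_sub volume volume
    refine (h.2.1.comp_quasiMeasurePreserving q).mono_ac ?_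
    exact Measure.AbsolutelyContinuous.rfl.prod Measure.restrict_le_self.absolutelyContinuous

lemma Q_cont {φ : ℝ → ℂ} {M : ℝ} (h : Nice φ M) {r : ℝ} (h0 : 0 ≤ r) (h1 : r < 1) :
    Continuous (fun θ : ℝ => conjPoissonIntR φ ((r : ℂ) * Complex.exp ((θ : ℂ) * I))) := by
  have hr := exp_mem h0 h1
  have cA := AA_rot_cont h hr
  have cB := AA_rot_cont h.cj hr
  have : (fun θ : ℝ => conjPoissonIntR φ ((r : ℂ) * Complex.exp ((θ : ℂ) * I))) = fun θ : ℝ =>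
        (AA φ ((r : ℂ) * Complex.exp ((θ : ℂ) * I)) - (starRingEnd ℂ)
          (AA (cj φ) ((r : ℂ) * Complex.exp ((θ : ℂ) * I)))) / (2 * I) := by
      ext θ; rw [cpois_eq (r_mem h0 h1 θ) (h.ii _ _)]
  rw [this]
  exact (cA.sub (Complex.continuous_conj.comp cB)).div_const _

lemma Hc_le {φ : ℝ → ℂ} {M : ℝ} (h : Nice φ M) {ε : ℝ} (h0 : 0 < ε) (h1 : ε < 1) (θ : ℝ) :
    ‖Hc ε φ θ‖ ≤ π * M +
      ‖conjPoissonIntR φ (((1 - ε : ℝ) : ℂ) * Complex.exp ((θ : ℂ) * I))‖ := by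
  have := Hc_sub h0 h1 h θ
  have h2 := norm_sub_norm_le (Hc ε φ θ)
    (conjPoissonIntR φ (((1 - ε : ℝ) : ℂ) * Complex.exp ((θ : ℂ) * I)))
  linarith

lemma Hc_int {φ : ℝ → ℂ} {M : ℝ} (h : Nice φ M) {ε : ℝ} (h0 : 0 < ε) (h1 : ε < 1) :
    Integrable (Hc ε φ) (volume.restrict (Ioc 0 (2 * π))) := by
  have c : Continuous (fun θ : ℝ => π * M +
      ‖conjPoissonIntR φ (((1 - ε : ℝ) : ℂ) * Complex.exp ((θ : ℂ) * I))‖) :=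
    continuous_const.add (Q_cont h (by linarith) (by linarith)).norm
  exact Integrable.mono' (c.integrableOn_Icc.mono_set Ioc_subset_Icc_self)
    (Hc_meas h ε).restrict (ae_of_all _ (Hc_le h h0 h1))

lemma Hc_ui {φ : ℝ → ℂ} {M : ℝ} (h : Nice φ M) (hm : ∫ t in (0:ℝ)..(2 * π), φ t = 0) :
    UnifIntegrable (fun n => Hc (en n) φ) 1 (volume.restrict (Ioc 0 (2 * π))) := by
  intro ε hε
  have hM : 0 ≤ M := (norm_nonneg _).trans (h.2.2 0)
  have hπ := Real.pi_pos
  set a := 4 * π * M ^ 2 / ε + 1 with ha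
  have hap : 0 < a := by positivity
  refine ⟨ε / 2 / (π * M + a), by positivity, fun n s hs hμ => ?_⟩
  rw [eLpNorm_one_eq_lintegral_enorm]
  have e1 : ∀ θ, ‖s.indicator (Hc (en n) φ) θ‖ₑ
      = s.indicator (fun θ => ‖Hc (en n) φ θ‖ₑ) θ := fun θ => enorm_indicator_eq_indicator_enorm _ _
  simp only [e1]
  rw [lintegral_indicator hs]
  set Q := fun θ : ℝ => conjPoissonIntR φ (((1 - en n : ℝ) : ℂ) * Complex.exp ((θ : ℂ) * I)) with hQ
  have h0 := en_pos n
  have h1 := en_lt n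
  have cQ : Continuous Q := Q_cont h (by linarith) (by linarith)
  have pt : ∀ θ, ‖Hc (en n) φ θ‖ₑ ≤ ENNReal.ofReal (π * M + a) + ENNReal.ofReal (‖Q θ‖ ^ 2 / a) := by
    intro θ
    rw [← ENNReal.ofReal_add (by positivity) (by positivity), ← ofReal_norm]
    apply ENNReal.ofReal_le_ofReal
    have := Hc_le h h0 h1 θ
    have h3 : ‖Q θ‖ ≤ a + ‖Q θ‖ ^ 2 / a := by
      rw [← sub_nonneg]
      have : a + ‖Q θ‖ ^ 2 / a - ‖Q θ‖ = (a ^ 2 + ‖Q θ‖ ^ 2 - a * ‖Q θ‖) / a := by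
        field_simp
      rw [this]
      apply div_nonneg _ hap.le
      nlinarith [sq_nonneg (a - ‖Q θ‖), sq_nonneg a, sq_nonneg ‖Q θ‖]
    simp only [hQ] at h3 ⊢
    linarith
  have iQ : Integrable (fun θ => ‖Q θ‖ ^ 2 / a) (volume.restrict (Ioc 0 (2 * π))) :=
    (((cQ.norm.pow 2).div_const a).integrableOn_Icc).mono_set Ioc_subset_Icc_self
  have bQ : ∫ θ in Ioc 0 (2 * π), ‖Q θ‖ ^ 2 / a ≤ ε / 2 := by
    rw [integral_div, ← intervalIntegral.integral_of_le (by positivity)]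
    have := Q_L2 h hm (r := 1 - en n) (by linarith) (by linarith)
    calc _ ≤ (2 * π * M ^ 2) / a := by gcongr
      _ ≤ ε / 2 := by
        rw [div_le_iff₀ hap, ha, mul_add, mul_one]
        have : ε / 2 * (4 * π * M ^ 2 / ε) = 2 * π * M ^ 2 := by field_simp; ring
        linarith
  calc _ ≤ ∫⁻ θ in s, (ENNReal.ofReal (π * M + a) + ENNReal.ofReal (‖Q θ‖ ^ 2 / a))
          ∂(volume.restrict (Ioc 0 (2 * π))) := lintegral_mono pt
    _ = ENNReal.ofReal (π * M + a) * (volume.restrict (Ioc 0 (2 * π))) s +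
        ∫⁻ θ in s, ENNReal.ofReal (‖Q θ‖ ^ 2 / a) ∂(volume.restrict (Ioc 0 (2 * π))) := by
      rw [lintegral_add_left measurable_const, setLIntegral_const]
    _ ≤ ENNReal.ofReal (π * M + a) * ENNReal.ofReal (ε / 2 / (π * M + a)) +
        ∫⁻ θ, ENNReal.ofReal (‖Q θ‖ ^ 2 / a) ∂(volume.restrict (Ioc 0 (2 * π))) := by
      exact add_le_add (by gcongr) (lintegral_mono' Measure.restrict_le_self le_rfl)
    _ ≤ ENNReal.ofReal (ε / 2) + ENNReal.ofReal (ε / 2) := by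
      gcongr
      · rw [← ENNReal.ofReal_mul (by positivity)]
        apply le_of_eq; congr 1; field_simp
      · rw [← ofReal_integral_eq_lintegral_ofReal iQ (ae_of_all _ fun θ => by positivity)]
        exact ENNReal.ofReal_le_ofReal bQ
    _ = ENNReal.ofReal ε := by
      rw [← ENNReal.ofReal_add (by positivity) (by positivity)]; congr 1; ring

lemma HF_meas {φ HF : ℝ → ℂ} {M : ℝ} (h : Nice φ M)
    (hH : ∀ᵐ θ : ℝ, Tendsto (fun ε => Hc ε φ θ) (𝓝[>] 0) (𝓝 (HF θ))) :
    AEStronglyMeasurable HF volume := by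
  refine aestronglyMeasurable_of_tendsto_ae atTop (fun n => Hc_meas h (en n)) ?_
  filter_upwards [hH] with θ hθ
  exact hθ.comp en_tend

lemma HF_pois {φ HF : ℝ → ℂ} {M : ℝ} (h : Nice φ M) (hm : ∫ t in (0:ℝ)..(2 * π), φ t = 0)
    (hH : ∀ᵐ θ : ℝ, Tendsto (fun ε => Hc ε φ θ) (𝓝[>] 0) (𝓝 (HF θ)))
    (hL : MemLpT ⊤ HF) {z : ℂ} (hz : z ∈ ball (0:ℂ) 1) :
    poissonIntR HF z = conjPoissonIntR φ z := by
  refine tendsto_nhds_unique ?_ (pois_Hc_lim h hm hz)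
  have hL1 : MemLp HF 1 (volume.restrict (Ioc 0 (2 * π))) := MemLp.mono_exponent hL le_top
  have t := tendsto_Lp_finite_of_tendsto_ae (le_refl 1) ENNReal.one_ne_top
    (fun n => (Hc_meas h (en n)).restrict) hL1 (Hc_ui h hm)
    (ae_restrict_of_ae (by
      filter_upwards [hH] with θ hθ
      exact hθ.comp en_tend))
  obtain ⟨C, hC⟩ := (isCompact_Icc (a := (0:ℝ)) (b := 2 * π)).exists_bound_of_continuousOn
      (pk_cont hz).continuousOn
  have pm : AEStronglyMeasurable
      (fun t : ℝ => (poissonKer (z * Complex.exp (-(t : ℂ) * Complex.I)) : ℂ))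
      (volume.restrict (Ioc 0 (2 * π))) :=
    (Complex.continuous_ofReal.comp (pk_cont hz)).aestronglyMeasurable
  have pb : ∀ᵐ (t : ℝ) ∂(volume.restrict (Ioc 0 (2 * π))),
      ‖(poissonKer (z * Complex.exp (-(t : ℂ) * Complex.I)) : ℂ)‖ ≤ C := by
    refine (ae_restrict_iff' measurableSet_Ioc).2 (ae_of_all _ fun s hs => ?_)
    rw [Complex.norm_real]
    exact hC s (Ioc_subset_Icc_self hs)
  unfold poissonIntR
  refine Tendsto.const_mul _ ?_
  simp only [intervalIntegral.integral_of_le (show (0:ℝ) ≤ 2 * π by positivity)]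
  refine tendsto_integral_of_L1' _
    ((memLp_one_iff_integrable.1 hL1).bdd_mul pm pb).aestronglyMeasurable
    (Eventually.of_forall fun n => (Hc_int h (en_pos n) (en_lt n)).bdd_mul pm pb) ?_
  have t2 := ENNReal.Tendsto.const_mul t (a := ENNReal.ofReal C) (Or.inr ENNReal.ofReal_ne_top)
  rw [mul_zero] at t2
  refine tendsto_of_tendsto_of_tendsto_of_le_of_le tendsto_const_nhds t2 (fun _ => zero_le)
    fun n => ?_
  refine eLpNorm_le_mul_eLpNorm_of_ae_le_mul ?_ 1
  filter_upwards [pb] with t ht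
  simp only [Pi.sub_apply]
  rw [← mul_sub, norm_mul]
  gcongr

lemma HF_bdd {φ HF : ℝ → ℂ} {M N : ℝ} (h : Nice φ M)
    (hH : ∀ᵐ θ : ℝ, Tendsto (fun ε => Hc ε φ θ) (𝓝[>] 0) (𝓝 (HF θ)))
    (hN : ∀ z ∈ ball (0:ℂ) 1, ‖conjPoissonIntR φ z‖ ≤ N) : MemLpT ⊤ HF := by
  refine memLp_top_of_bound (HF_meas h hH).restrict (π * M + N) (ae_restrict_of_ae ?_)
  filter_upwards [hH] with θ hθ
  refine le_of_tendsto (hθ.comp en_tend).norm (Eventually.of_forall fun n => ?_)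
  have h0 := en_pos n
  have h1 := en_lt n
  have := Hc_le h h0 h1 θ
  have h2 := hN _ (r_mem (r := 1 - en n) (by linarith) (by linarith) θ)
  simp only [Function.comp_apply]
  linarith

lemma wirt {G : ℝ → ℂ} {N : ℝ} (h : Nice G N) {f : ℂ → ℂ}
    (hf : ∀ z ∈ ball (0:ℂ) 1, f z = poissonIntR G z) {z : ℂ} (hz : z ∈ ball (0:ℂ) 1) :
    wdz f z = deriv (AA G) z / 2 ∧
      (starRingEnd ℂ) (wdzb f z) = deriv (AA (cj G)) z / 2 := by
  have hb := isOpen_ball.mem_nhds hz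
  have d1 := ((AA_diff h).differentiableAt hb).hasDerivAt.hasFDerivAt.restrictScalars ℝ
  have d2 := ((AA_diff h.cj).differentiableAt hb).hasDerivAt.hasFDerivAt.restrictScalars ℝ
  have d3 := (Complex.conjCLE : ℂ →L[ℝ] ℂ).hasFDerivAt.comp z d2
  have d4 := (d1.add d3).const_smul (1 / 2 : ℂ)
  have e : f =ᶠ[𝓝 z] fun w => (1 / 2 : ℂ) • (AA G w + (starRingEnd ℂ) (AA (cj G) w)) := by
    filter_upwards [hb] with w hw
    rw [hf w hw, pois_eq hw (h.ii _ _), smul_eq_mul]; ring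
  have d5 := HasFDerivAt.congr_of_eventuallyEq d4 e
  generalize deriv (AA G) z = a at *
  generalize deriv (AA (cj G)) z = b at *
  have f1 : fderiv ℝ f z 1 = (1 / 2) * (a + (starRingEnd ℂ) b) := by
    rw [d5.fderiv]; simp; ring
  have f2 : fderiv ℝ f z I = (1 / 2) * (I * a + (starRingEnd ℂ) (I * b)) := by
    rw [d5.fderiv]; simp; ring
  unfold wdz wdzb
  rw [f1, f2]
  have hI := Complex.I_sq
  have c2 : (starRingEnd ℂ) 2 = 2 := Complex.conj_ofReal 2
  constructor
  · simp only [map_mul, Complex.conj_I]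
    linear_combination (-(1/4) * a + (1/4) * (starRingEnd ℂ) b) * hI
  · simp only [map_mul, map_add, Complex.conj_I, map_div₀, map_one, c2, Complex.conj_conj, map_neg,
      neg_neg]
    linear_combination ((1/4) * (starRingEnd ℂ) a - (1/4) * b) * hI

lemma hinf_of {g : ℂ → ℂ} (hg : DifferentiableOn ℂ g (ball 0 1)) {K : ℝ}
    (hK : ∀ z ∈ ball (0:ℂ) 1, ‖I * z * g z‖ ≤ K) : MemHinf g := by
  refine ⟨hg, ?_⟩
  obtain ⟨C, hC⟩ := (isCompact_closedBall (0:ℂ) (1/2)).exists_bound_of_continuousOn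
    (hg.continuousOn.mono (closedBall_subset_ball (by norm_num)))
  refine ⟨max C (2 * K), fun z hz => ?_⟩
  by_cases h : z ∈ closedBall (0:ℂ) (1/2)
  · exact (hC z h).trans (le_max_left _ _)
  · refine le_trans ?_ (le_max_right _ _)
    have := hK z hz
    rw [norm_mul, norm_mul, Complex.norm_I, one_mul] at this
    simp at h
    nlinarith [norm_nonneg (g z)]

lemma ae_of_per {P : ℝ → Prop} (hP : ∀ t, P (t + 2 * π) ↔ P t)
    (h : ∀ᵐ t ∂(volume.restrict (Ioc 0 (2 * π))), P t) : ∀ᵐ t : ℝ, P t := by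
  have h1 := (ae_restrict_iff' measurableSet_Ioc).1 h
  have hp : Function.Periodic P (2 * π) := fun t => propext (hP t)
  have h2 : ∀ᵐ t : ℝ, ∀ n : ℤ, t + n • (2 * π) ∈ Ioc 0 (2 * π) → P (t + n • (2 * π)) := by
    rw [ae_all_iff]
    intro n
    exact (measurePreserving_add_right volume (n • (2 * π))).quasiMeasurePreserving.ae h1
  filter_upwards [h2] with t ht
  obtain ⟨n, hn, _⟩ := existsUnique_add_zsmul_mem_Ioc Real.two_pi_pos t 0
  rw [zero_add] at hn
  have h3 := ht n hn
  rwa [hp.zsmul n t] at h3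

lemma core {φ G HF : ℝ → ℂ} {M N : ℝ} (h : Nice φ M) (hG : Nice G N)
    (hd : ∀ t θ, G (t + θ) - G t = ∫ s in (0:ℝ)..θ, φ (t + s))
    (hH : ∀ᵐ θ : ℝ, Tendsto (fun ε => Hc ε φ θ) (𝓝[>] 0) (𝓝 (HF θ)))
    {f : ℂ → ℂ} (hf : ∀ z ∈ ball (0:ℂ) 1, f z = poissonIntR G z) :
    ((MemHinf (wdz f) ∧ MemHinf (fun z => (starRingEnd ℂ) (wdzb f z))) ↔ MemLpT ⊤ HF) ∧
    (MemLpT ⊤ HF → ∀ z ∈ ball (0:ℂ) 1,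
        2 * Complex.I * z * wdz f z = poissonIntR (fun t => φ t + Complex.I * HF t) z) := by
  have hm : ∫ t in (0:ℝ)..(2 * π), φ t = 0 := by
    have := hd 0 (2 * π)
    simp only [zero_add] at this
    rw [← this, ← zero_add (2 * π), hG.1 0, sub_self]
  have hdc : ∀ t θ, cj G (t + θ) - cj G t = ∫ s in (0:ℝ)..θ, cj φ (t + s) := by
    intro t θ
    have i : IntervalIntegrable (fun s => φ (t + s)) volume 0 θ := by
      have := (h.ii (0 + t) (θ + t)).comp_add_left t
      simpa using this
    have := (Complex.conjCLE : ℂ →L[ℝ] ℂ).intervalIntegral_comp_comm i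
    rw [← hd] at this
    simpa [cj] using this.symm
  have k1 : ∀ z ∈ ball (0:ℂ) 1, 2 * I * z * wdz f z = AA φ z := by
    intro z hz
    rw [(wirt hG hf hz).1, ← AA_deriv h hG hd hz]; ring
  have k2 : ∀ z ∈ ball (0:ℂ) 1, 2 * I * z * (starRingEnd ℂ) (wdzb f z) = AA (cj φ) z := by
    intro z hz
    rw [(wirt hG hf hz).2, ← AA_deriv h.cj hG.cj hdc hz]; ring
  have PQ : ∀ z ∈ ball (0:ℂ) 1, AA φ z = poissonIntR φ z + I * conjPoissonIntR φ z := by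
    intro z hz
    rw [pois_eq hz (h.ii _ _), cpois_eq hz (h.ii _ _)]
    have := Complex.I_ne_zero
    field_simp
    ring
  have PQ' : ∀ z ∈ ball (0:ℂ) 1, (starRingEnd ℂ) (AA (cj φ) z)
      = poissonIntR φ z - I * conjPoissonIntR φ z := by
    intro z hz
    rw [pois_eq hz (h.ii _ _), cpois_eq hz (h.ii _ _)]
    have := Complex.I_ne_zero
    field_simp
    ring
  have dd1 : DifferentiableOn ℂ (wdz f) (ball 0 1) :=
    (((AA_diff hG).deriv isOpen_ball).div_const 2).congr fun z hz => (wirt hG hf hz).1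
  have dd2 : DifferentiableOn ℂ (fun z => (starRingEnd ℂ) (wdzb f z)) (ball 0 1) :=
    (((AA_diff hG.cj).deriv isOpen_ball).div_const 2).congr fun z hz => (wirt hG hf hz).2
  refine ⟨⟨?_, ?_⟩, ?_⟩
  · rintro ⟨⟨_, K1, hK1⟩, ⟨_, K2, hK2⟩⟩
    refine HF_bdd h hH (N := K1 + K2) fun z hz => ?_
    rw [cpois_eq hz (h.ii _ _), norm_div, norm_mul, Complex.norm_I, mul_one]
    have hz1 : ‖z‖ ≤ 1 := by simp at hz; exact hz.le
    have b : ∀ w : ℂ, ‖2 * I * z * w‖ ≤ 2 * ‖w‖ := by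
      intro w
      rw [norm_mul, norm_mul, norm_mul, Complex.norm_I, mul_one]
      simp only [Complex.norm_ofNat]
      nlinarith [norm_nonneg w]
    have b1 := b (wdz f z)
    have b2 := b ((starRingEnd ℂ) (wdzb f z))
    rw [k1 z hz] at b1
    rw [k2 z hz] at b2
    have c1 := hK1 z hz
    have c2 := hK2 z hz
    have := norm_sub_le (AA φ z) ((starRingEnd ℂ) (AA (cj φ) z))
    rw [RCLike.norm_conj (AA (cj φ) z)] at this
    simp only [Complex.norm_ofNat]
    rw [div_le_iff₀ two_pos]
    linarith
  · intro hL
    obtain ⟨K, hK⟩ : ∃ K, ∀ᵐ t ∂(volume.restrict (Ioc 0 (2 * π))), ‖HF t‖ ≤ K := by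
      refine ⟨(eLpNorm HF ⊤ (volume.restrict (Ioc 0 (2 * π)))).toReal, ?_⟩
      filter_upwards [ae_le_eLpNormEssSup (f := HF) (μ := volume.restrict (Ioc 0 (2 * π)))] with t ht
      rw [← toReal_enorm, eLpNorm_exponent_top]
      refine ENNReal.toReal_mono ?_ ht
      have := hL.2.ne
      rwa [eLpNorm_exponent_top] at this
    have bQ : ∀ z ∈ ball (0:ℂ) 1, ‖conjPoissonIntR φ z‖ ≤ K := by
      intro z hz
      rw [← HF_pois h hm hH hL hz]
      exact pois_bound hz hK
    have bP : ∀ z ∈ ball (0:ℂ) 1, ‖poissonIntR φ z‖ ≤ M := fun z hz =>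
      pois_bound hz (ae_of_all _ h.2.2)
    have e : ∀ z w : ℂ, ‖I * z * w‖ = ‖2 * I * z * w‖ / 2 := by
      intro z w
      rw [show 2 * I * z * w = 2 * (I * z * w) by ring, norm_mul 2, Complex.norm_ofNat]; ring
    constructor
    · refine hinf_of dd1 (K := (M + K) / 2) fun z hz => ?_
      rw [e, k1 z hz, PQ z hz]
      have := norm_add_le (poissonIntR φ z) (I * conjPoissonIntR φ z)
      rw [norm_mul I, Complex.norm_I, one_mul] at this
      linarith [bQ z hz, bP z hz]
    · refine hinf_of dd2 (K := (M + K) / 2) fun z hz => ?_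
      rw [e, k2 z hz, ← RCLike.norm_conj, PQ' z hz]
      have := norm_sub_le (poissonIntR φ z) (I * conjPoissonIntR φ z)
      rw [norm_mul I, Complex.norm_I, one_mul] at this
      linarith [bQ z hz, bP z hz]
  · intro hL z hz
    rw [k1 z hz, PQ z hz, ← HF_pois h hm hH hL hz]
    have iH : IntervalIntegrable HF volume 0 (2 * π) := by
      rw [intervalIntegrable_iff_integrableOn_Ioc_of_le (by positivity)]
      exact memLp_one_iff_integrable.1 (MemLp.mono_exponent hL le_top)
    have pc := Complex.continuous_ofReal.comp (pk_cont hz)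
    have i1 : IntervalIntegrable (fun t : ℝ =>
        (poissonKer (z * Complex.exp (-(t : ℂ) * Complex.I)) : ℂ) * φ t) volume 0 (2 * π) :=
      (h.ii _ _).continuousOn_mul pc.continuousOn
    have i2 : IntervalIntegrable (fun t : ℝ =>
        (poissonKer (z * Complex.exp (-(t : ℂ) * Complex.I)) : ℂ) * HF t) volume 0 (2 * π) :=
      iH.continuousOn_mul pc.continuousOn
    unfold poissonIntR
    rw [← mul_assoc, mul_comm I, mul_assoc, ← mul_add, ← intervalIntegral.integral_const_mul,
      ← intervalIntegral.integral_add i1 (i2.const_mul I)]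
    congr 2; ext t; ring

lemma main_red (F : ℂ → ℂ) (Fd HF : ℝ → ℂ)
    (hF : IsACDeriv F Fd) (hLinf : MemLpT ⊤ Fd)
    (hHF : ∀ᵐ θ : ℝ, IsPVHilbert Fd θ (HF θ)) :
    ((MemHinf (wdz (poissonInt F)) ∧
        MemHinf (fun z => (starRingEnd ℂ) (wdzb (poissonInt F) z))) ↔
      MemLpT ⊤ HF) ∧
    (MemLpT ⊤ HF →
      ∀ z ∈ ball (0:ℂ) 1,
        2 * Complex.I * z * wdz (poissonInt F) z
          = poissonIntR (fun t => Fd t + Complex.I * HF t) z) := by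
  obtain ⟨hi, hper, hFt⟩ := hF
  obtain ⟨M, hM0, hM⟩ : ∃ M, 0 ≤ M ∧ ∀ᵐ t ∂(volume.restrict (Ioc 0 (2 * π))), ‖Fd t‖ ≤ M := by
    refine ⟨(eLpNorm Fd ⊤ (volume.restrict (Ioc 0 (2 * π)))).toReal, ENNReal.toReal_nonneg, ?_⟩
    filter_upwards [ae_le_eLpNormEssSup (f := Fd) (μ := volume.restrict (Ioc 0 (2 * π)))] with t ht
    rw [← toReal_enorm, eLpNorm_exponent_top]
    refine ENNReal.toReal_mono ?_ ht
    have := hLinf.2.ne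
    rwa [eLpNorm_exponent_top] at this
  have hMa : ∀ᵐ t : ℝ, ‖Fd t‖ ≤ M := ae_of_per (fun t => by rw [hper t]) hM
  classical
  set φ : ℝ → ℂ := fun t => if ‖Fd t‖ ≤ M then Fd t else 0 with hφ
  have hae : φ =ᵐ[volume] Fd := by
    filter_upwards [hMa] with t ht
    simp [hφ, ht]
  have hmeas : AEStronglyMeasurable Fd volume := by
    have hu : (⋃ n : ℕ, Ioc (-(n:ℝ)) n) = univ := by
      refine eq_univ_of_forall fun t => mem_iUnion.2 ?_
      obtain ⟨n, hn⟩ := exists_nat_gt |t|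
      have := abs_lt.1 hn
      exact ⟨n, this.1, this.2.le⟩
    rw [← Measure.restrict_univ (μ := volume), ← hu, aestronglyMeasurable_iUnion_iff]
    exact fun n => (hi (-n) n).1.aestronglyMeasurable
  have hN : Nice φ M := by
    refine ⟨fun t => by simp only [hφ, hper t], hmeas.congr hae.symm, fun t => ?_⟩
    simp only [hφ]
    split_ifs with h
    · exact h
    · simpa using hM0
  set G : ℝ → ℂ := fun t => F (Complex.exp ((t : ℂ) * I)) with hGdef
  have Gper : Function.Periodic G (2 * π) := by
    intro t
    have : Complex.exp (((t + 2 * π : ℝ) : ℂ) * I) = Complex.exp ((t : ℂ) * I) := by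
      rw [← Complex.exp_periodic ((t : ℂ) * I)]; push_cast; ring_nf
    simp only [hGdef, this]
  have Gcont : Continuous G := by
    have : G = fun t => F 1 + ∫ s in (0:ℝ)..t, Fd s := funext hFt
    rw [this]
    exact continuous_const.add (intervalIntegral.continuous_primitive hi 0)
  obtain ⟨N, hNb⟩ := (isCompact_Icc (a := (0:ℝ)) (b := 2 * π)).exists_bound_of_continuousOn
    Gcont.continuousOn
  have hG : Nice G N := by
    refine ⟨Gper, Gcont.aestronglyMeasurable, fun t => ?_⟩
    obtain ⟨y, hy, e⟩ := Gper.exists_mem_Ico₀ Real.two_pi_pos t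
    rw [e]
    exact hNb y ⟨hy.1, hy.2.le⟩
  have hd : ∀ t θ, G (t + θ) - G t = ∫ s in (0:ℝ)..θ, φ (t + s) := by
    intro t θ
    simp only [hGdef]
    rw [hFt, hFt, add_sub_add_left_eq_sub, intervalIntegral.integral_interval_sub_left (hi _ _)
      (hi _ _), intervalIntegral.integral_comp_add_left, add_zero]
    refine intervalIntegral.integral_congr_ae ?_
    filter_upwards [hae] with s hs _ using hs.symm
  have hH : ∀ᵐ θ : ℝ, Tendsto (fun ε => Hc ε φ θ) (𝓝[>] 0) (𝓝 (HF θ)) := by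
    filter_upwards [hHF] with θ hθ
    refine Tendsto.congr (fun ε => ?_) hθ
    unfold Hc
    congr 1
    refine integral_congr_ae (ae_restrict_of_ae ?_)
    filter_upwards [hae] with t ht
    rw [ht]
  have := core hN hG hd hH (f := poissonInt F) (fun z _ => rfl)
  refine ⟨this.1, fun hL z hz => ?_⟩
  rw [this.2 hL z hz]
  unfold poissonIntR
  congr 1
  refine intervalIntegral.integral_congr_ae ?_
  filter_upwards [hae] with t ht _
  rw [ht]

/-- For `F : 𝕋 → ℂ` absolutely continuous with `Ḟ ∈ L^∞(𝕋)` and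
`f = P[F]`: `f_z` and `conj (f_z̄)` lie in `H^∞(𝔻)` iff the Hilbert transform `H(Ḟ)`
lies in `L^∞(𝕋)`, and in that case `2 i z f_z(z) = P[Ḟ + i H(Ḟ)](z)` on `𝔻`. -/
theorem stmt2 (F : ℂ → ℂ) (Fd HF : ℝ → ℂ)
    (hF : IsACDeriv F Fd) (hLinf : MemLpT ⊤ Fd)
    (hHF : ∀ᵐ θ : ℝ, IsPVHilbert Fd θ (HF θ)) :
    ((MemHinf (wdz (poissonInt F)) ∧
        MemHinf (fun z => (starRingEnd ℂ) (wdzb (poissonInt F) z))) ↔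
      MemLpT ⊤ HF) ∧
    (MemLpT ⊤ HF →
      ∀ z ∈ ball (0:ℂ) 1,
        2 * Complex.I * z * wdz (poissonInt F) z
          = poissonIntR (fun t => Fd t + Complex.I * HF t) z) := by
  exact main_red F Fd HF hF hLinf hHF

end
end

section
/- Let p ∈ (1, ∞), let F : 𝕋 → ℂ be absolutely continuous with Ḟ ∈ L^p(𝕋), and let f = P[F] be its Poisson integral. Then the function z = re^{iθ} ↦ r f_r(z) (the radial derivative multiplied by r) belongs to the harmonic Hardy space h^p(𝔻). -/
open MeasureTheory Complex Metric Set Filter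
open scoped Real Topology ENNReal

noncomputable section

abbrev muT : Measure ℝ := volume.restrict (Ioc (0:ℝ) (2 * π))

def SK (z : ℂ) : ℂ := (1 + z) / (1 - z)

def ee (t : ℝ) : ℂ := Complex.exp (-(t : ℂ) * Complex.I)

def HS (φ : ℝ → ℂ) (z : ℂ) : ℂ := ∫ t, SK (z * ee t) * φ t ∂muT

lemma ee_norm (t : ℝ) : ‖ee t‖ = 1 := by
  have := Complex.norm_exp_ofReal_mul_I (-t)
  simpa [ee] using this

@[fun_prop] lemma ee_cont : Continuous ee := by unfold ee; fun_prop

lemma one_sub_ne {w : ℂ} (h : ‖w‖ < 1) : 1 - w ≠ 0 := by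
  intro h0
  have : w = 1 := by linear_combination -h0
  rw [this] at h; simp at h

lemma one_sub_norm {w : ℂ} {r : ℝ} (h : ‖w‖ ≤ r) : 1 - r ≤ ‖1 - w‖ := by
  have := norm_sub_norm_le (1:ℂ) w
  simp at this; linarith

lemma SK_bound {w : ℂ} {r : ℝ} (h : ‖w‖ ≤ r) (hr : r < 1) : ‖SK w‖ ≤ 2 / (1 - r) := by
  unfold SK
  rw [norm_div]
  have h1 : ‖1 + w‖ ≤ 2 := (norm_add_le _ _).trans (by simp; linarith)
  exact div_le_div₀ (by norm_num) h1 (by linarith) (one_sub_norm h)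

lemma SK_deriv {w : ℂ} (h : ‖w‖ < 1) : HasDerivAt SK (2 / (1 - w) ^ 2) w := by
  have h0 := one_sub_ne h
  have := ((hasDerivAt_id w).const_add 1).div ((hasDerivAt_id w).const_sub 1) h0
  refine HasDerivAt.congr_deriv (f := SK) this ?_
  simp only [id]; ring

lemma SK_deriv_bound {w : ℂ} {r : ℝ} (h : ‖w‖ ≤ r) (hr : r < 1) :
    ‖2 / (1 - w) ^ 2‖ ≤ 2 / (1 - r) ^ 2 := by
  rw [norm_div, norm_pow]
  have := one_sub_norm h
  have h2 : 0 < 1 - r := by linarith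
  have h3 : ‖(2:ℂ)‖ = 2 := by simp
  rw [h3]
  gcongr

lemma norm_mul_ee (z : ℂ) (t : ℝ) : ‖z * ee t‖ = ‖z‖ := by simp [ee_norm]

lemma SK_ee_cont {z : ℂ} (h : ‖z‖ < 1) : Continuous fun t => SK (z * ee t) := by
  rw [continuous_iff_continuousAt]
  intro t
  have : ‖z * ee t‖ < 1 := by rwa [norm_mul_ee]
  exact ContinuousAt.comp (g := SK) (SK_deriv this).continuousAt (by fun_prop)

lemma SK_mul_int {φ : ℝ → ℂ} (hφ : Integrable φ muT) {z : ℂ} (h : ‖z‖ < 1) :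
    Integrable (fun t => SK (z * ee t) * φ t) muT := by
  refine hφ.bdd_mul (c := 2 / (1 - ‖z‖)) (SK_ee_cont h).aestronglyMeasurable ?_
  exact .of_forall fun t => SK_bound (norm_mul_ee z t).le h

lemma HS_deriv {φ : ℝ → ℂ} (hφ : Integrable φ muT) {z : ℂ} (h : ‖z‖ < 1) :
    HasDerivAt (HS φ) (∫ t, 2 / (1 - z * ee t) ^ 2 * ee t * φ t ∂muT) z := by
  obtain ⟨r, hr, hr1⟩ := exists_between h
  have hs : ball (0:ℂ) r ∈ 𝓝 z := isOpen_ball.mem_nhds (by simpa using hr)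
  have hne : ∀ t, (1 - z * ee t) ^ 2 ≠ 0 := fun t =>
    pow_ne_zero _ (one_sub_ne (by rwa [norm_mul_ee]))
  refine (hasDerivAt_integral_of_dominated_loc_of_deriv_le (F := fun z t => SK (z * ee t) * φ t)
    (F' := fun z t => 2 / (1 - z * ee t) ^ 2 * ee t * φ t)
    (bound := fun t => 2 / (1 - r) ^ 2 * ‖φ t‖) hs ?_ (SK_mul_int hφ h) ?_ ?_ ?_ ?_).2
  · filter_upwards [hs] with w hw
    exact (SK_mul_int hφ (by simp at hw; linarith)).aestronglyMeasurable
  · refine AEStronglyMeasurable.mul ?_ hφ.aestronglyMeasurable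
    apply Continuous.aestronglyMeasurable
    exact (Continuous.div (by fun_prop) (by fun_prop) hne).mul ee_cont
  · refine .of_forall fun t w hw => ?_
    simp only [mem_ball, dist_zero_right] at hw
    rw [norm_mul, norm_mul, ee_norm, mul_one]
    gcongr
    exact SK_deriv_bound (by rw [norm_mul_ee]; exact hw.le) hr1
  · exact hφ.norm.const_mul _
  · refine .of_forall fun t w hw => ?_
    simp only [mem_ball, dist_zero_right] at hw
    have h1 : HasDerivAt (fun w => w * ee t) (ee t) w := by
      simpa using (hasDerivAt_id w).mul_const (ee t)
    exact ((SK_deriv (by rw [norm_mul_ee]; linarith)).comp w h1).mul_const (φ t)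

lemma ee_hasDeriv (t : ℝ) : HasDerivAt ee (-Complex.I * ee t) t := by
  have h1 : HasDerivAt (fun t : ℝ => -(t : ℂ) * Complex.I) (-Complex.I) t := by
    simpa using ((Complex.ofRealCLM.hasDerivAt (x := t)).neg).mul_const Complex.I
  have := h1.cexp
  unfold ee
  convert this using 1
  ring

/-- integration by parts -/
lemma parts_aux {g g' φ : ℝ → ℂ} (hg : ∀ t, HasDerivAt g (g' t) t) (hg' : Continuous g')
    (hφ : Integrable φ muT) :
    ∫ t, g' t * (∫ s in (0:ℝ)..t, φ s) ∂muT = ∫ s, (g (2 * π) - g s) * φ s ∂muT := by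
  have hT : (0:ℝ) ≤ 2 * π := by positivity
  let k : ℝ → ℝ → ℂ := fun t s => g' t * (indicator {q : ℝ × ℝ | q.2 ≤ q.1} 1 (t, s) * φ s)
  have e1 : ∫ t, g' t * (∫ s in (0:ℝ)..t, φ s) ∂muT = ∫ t, ∫ s, k t s ∂muT ∂muT := by
    refine setIntegral_congr_fun measurableSet_Ioc fun t ht => ?_
    simp only [k]
    rw [integral_const_mul]
    congr 1
    rw [intervalIntegral.integral_of_le ht.1.le]
    have : ∀ s, indicator {q : ℝ × ℝ | q.2 ≤ q.1} (1 : ℝ × ℝ → ℂ) (t, s) * φ s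
        = indicator (Iic t) φ s := by
      intro s
      by_cases h : s ≤ t <;> simp [indicator, h]
    simp_rw [this]
    rw [integral_indicator measurableSet_Iic, Measure.restrict_restrict measurableSet_Iic]
    congr 2
    ext s; simp only [mem_Ioc, mem_inter_iff, mem_Iic]
    exact ⟨fun h => ⟨h.2, h.1, h.2.trans ht.2⟩, fun h => ⟨h.2.1, h.1⟩⟩
  have e2 : ∫ s, (g (2 * π) - g s) * φ s ∂muT = ∫ s, ∫ t, k t s ∂muT ∂muT := by
    refine setIntegral_congr_fun measurableSet_Ioc fun s hs => ?_
    have : ∀ t, k t s = indicator (Ici s) g' t * φ s := by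
      intro t
      by_cases h : s ≤ t <;> simp [k, indicator, h]
    simp_rw [this]
    rw [integral_mul_const]
    congr 1
    rw [integral_indicator measurableSet_Ici, Measure.restrict_restrict measurableSet_Ici]
    rw [← intervalIntegral.integral_eq_sub_of_hasDerivAt (fun t _ => hg t)
      (hg'.intervalIntegrable _ _), intervalIntegral.integral_of_le hs.2,
      ← integral_Icc_eq_integral_Ioc]
    congr 2
    ext t; simp only [mem_Icc, mem_inter_iff, mem_Ici, mem_Ioc]
    exact ⟨fun h => ⟨h.1, hs.1.trans_le h.1, h.2⟩, fun h => ⟨h.1, h.2.2⟩⟩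
  rw [e1, e2]
  apply integral_integral_swap
  have hgi : Integrable g' muT := by
    have := hg'.intervalIntegrable (μ := volume) 0 (2*π)
    rwa [intervalIntegrable_iff_integrableOn_Ioc_of_le hT] at this
  have hp := hgi.mul_prod hφ
  have hm : MeasurableSet {q : ℝ × ℝ | q.2 ≤ q.1} := measurableSet_le measurable_snd measurable_fst
  have := hp.indicator hm
  refine this.congr (.of_forall fun q => ?_)
  obtain ⟨t, s⟩ := q
  by_cases h : s ≤ t <;> simp [k, indicator, h]

local notation "conj'" => starRingEnd ℂ

def VS (φ : ℝ → ℂ) (z : ℂ) : ℂ := ∫ t, ((SK (z * ee t)).im : ℂ) * φ t ∂muT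

lemma zHS_deriv {Φ φ : ℝ → ℂ} {c : ℂ} (hφ : Integrable φ muT)
    (hΦ : ∀ t, Φ t = c + ∫ s in (0:ℝ)..t, φ s) (hper : Φ (2 * π) = Φ 0)
    (hΦi : Integrable Φ muT) {z : ℂ} (h : ‖z‖ < 1) :
    z * deriv (HS Φ) z = -Complex.I * HS φ z := by
  have hT : (0:ℝ) ≤ 2 * π := by positivity
  rw [(HS_deriv hΦi h).deriv]
  set g : ℝ → ℂ := fun t => SK (z * ee t) with hgdef
  set g' : ℝ → ℂ := fun t => 2 / (1 - z * ee t) ^ 2 * (z * (-Complex.I * ee t)) with hg'def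
  have hne : ∀ t, (1 - z * ee t) ^ 2 ≠ 0 := fun t =>
    pow_ne_zero _ (one_sub_ne (by rwa [norm_mul_ee]))
  have hg'c : Continuous g' :=
    (Continuous.div (by fun_prop) (by fun_prop) hne).mul (by fun_prop)
  have hg : ∀ t, HasDerivAt g (g' t) t := fun t =>
    (SK_deriv (by rwa [norm_mul_ee])).comp t ((ee_hasDeriv t).const_mul z)
  have hgi : Integrable g' muT := by
    have := hg'c.intervalIntegrable (μ := volume) 0 (2*π)
    rwa [intervalIntegrable_iff_integrableOn_Ioc_of_le hT] at this
  have hP := parts_aux hg hg'c hφ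
  have hgper : g (2 * π) = g 0 := by
    have h2 : ee (2 * π) = ee 0 := by
      simp only [ee]
      push_cast
      rw [neg_mul, Complex.exp_neg, Complex.exp_two_pi_mul_I]; simp
    simp only [hgdef, h2]
  have hg0 : ∫ t, g' t ∂muT = 0 := by
    have := intervalIntegral.integral_eq_sub_of_hasDerivAt (fun t _ => hg t)
      (hg'c.intervalIntegrable 0 (2*π))
    rw [intervalIntegral.integral_of_le hT] at this
    rw [this, hgper, sub_self]
  have hφ0 : ∫ t, φ t ∂muT = 0 := by
    have h1 := hΦ (2 * π)
    rw [hper, hΦ 0, intervalIntegral.integral_same, intervalIntegral.integral_of_le hT] at h1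
    simpa using h1.symm
  have hgΦ : Integrable (fun t => g' t * Φ t) muT := by
    have : ∀ t, g' t * Φ t = (z * -Complex.I) * (2 / (1 - z * ee t) ^ 2 * ee t * Φ t) := by
      intro t; simp only [hg'def]; ring
    simp_rw [this]
    apply Integrable.const_mul
    refine hΦi.bdd_mul (c := 2 / (1 - ‖z‖) ^ 2) ?_ ?_
    · exact ((Continuous.div (by fun_prop) (by fun_prop) hne).mul ee_cont).aestronglyMeasurable
    · refine .of_forall fun t => ?_
      rw [norm_mul, ee_norm, mul_one]
      exact SK_deriv_bound (by rw [norm_mul_ee]) h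
  have e1 : z * ∫ t, 2 / (1 - z * ee t) ^ 2 * ee t * Φ t ∂muT
      = Complex.I * ∫ t, g' t * Φ t ∂muT := by
    rw [← integral_const_mul, ← integral_const_mul]
    congr 1; ext t
    simp only [hg'def]
    linear_combination (2 / (1 - z * ee t) ^ 2 * ee t * Φ t * z) * Complex.I_sq
  have e2 : ∫ t, g' t * Φ t ∂muT = c * ∫ t, g' t ∂muT + ∫ t, g' t * (∫ s in (0:ℝ)..t, φ s) ∂muT := by
    have h3 : ∀ t, g' t * (∫ s in (0:ℝ)..t, φ s) = g' t * Φ t - c * g' t := by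
      intro t; rw [hΦ t]; ring
    simp_rw [h3]
    rw [integral_sub hgΦ (hgi.const_mul c), integral_const_mul]; ring
  have e3 : ∫ s, (g (2 * π) - g s) * φ s ∂muT = - HS φ z := by
    simp_rw [sub_mul]
    rw [integral_sub (hφ.const_mul _) (SK_mul_int hφ h), integral_const_mul, hφ0]
    simp [HS, hgdef]
  rw [e1, e2, hg0, hP, e3]; ring

lemma poissonKer_eq (z : ℂ) : poissonKer z = (SK z).re := by
  unfold poissonKer SK
  rw [Complex.div_re, ← Complex.normSq_eq_norm_sq, ← Complex.normSq_eq_norm_sq, ← add_div]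
  congr 1
  simp [Complex.normSq_apply]; ring

lemma ker_re (w : ℂ) : ((w.re : ℝ) : ℂ) = (w + conj' w) / 2 := by
  rw [Complex.add_conj]; push_cast; ring

lemma ker_im (w : ℂ) : ((w.im : ℝ) : ℂ) = (-Complex.I * w + conj' (-Complex.I * w)) / 2 := by
  rw [Complex.add_conj]; simp

lemma conj_HS (φ : ℝ → ℂ) (z : ℂ) :
    conj' (HS (fun t => conj' (φ t)) z) = ∫ t, conj' (SK (z * ee t)) * φ t ∂muT := by
  unfold HS
  rw [← integral_conj]
  simp

lemma conj_SK_int {φ : ℝ → ℂ} (hφ : Integrable φ muT) {z : ℂ} (h : ‖z‖ < 1) :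
    Integrable (fun t => conj' (SK (z * ee t)) * φ t) muT := by
  refine hφ.bdd_mul (c := 2 / (1 - ‖z‖)) ?_ ?_
  · exact (Complex.continuous_conj.comp (SK_ee_cont h)).aestronglyMeasurable
  · exact .of_forall fun t => by
      rw [RCLike.norm_conj]; exact SK_bound (norm_mul_ee z t).le h

lemma poissonInt_eq (F : ℂ → ℂ) {Φ : ℝ → ℂ} (hΦ : ∀ t : ℝ, F (Complex.exp ((t : ℂ) * Complex.I)) = Φ t)
    (hi : Integrable Φ muT) {z : ℂ} (h : ‖z‖ < 1) :
    poissonInt F z = (1 / (2 * π)) * ((HS Φ z + conj' (HS (fun t => conj' (Φ t)) z)) / 2) := by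
  unfold poissonInt
  congr 1
  rw [intervalIntegral.integral_of_le (by positivity), conj_HS]
  unfold HS
  rw [← integral_add (SK_mul_int hi h) (conj_SK_int hi h), ← integral_div]
  congr 1; ext t
  rw [poissonKer_eq, ker_re, hΦ t]
  change (SK (z * ee t) + conj' (SK (z * ee t))) / 2 * Φ t = _
  ring

lemma VS_eq {φ : ℝ → ℂ} (hi : Integrable φ muT) {z : ℂ} (h : ‖z‖ < 1) :
    VS φ z = (-Complex.I * HS φ z + conj' (-Complex.I * HS (fun t => conj' (φ t)) z)) / 2 := by
  rw [map_mul, conj_HS]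
  unfold VS HS
  rw [← integral_const_mul, ← integral_const_mul, ← integral_add ((SK_mul_int hi h).const_mul _)
    ((conj_SK_int hi h).const_mul _), ← integral_div]
  congr 1; ext t
  rw [ker_im, map_mul]
  ring

lemma conj_int {φ : ℝ → ℂ} (hi : Integrable φ muT) : Integrable (fun t => conj' (φ t)) muT :=
  Complex.conjCLE.toContinuousLinearMap.integrable_comp hi

lemma rFr_of {f A B : ℂ → ℂ} {c A' B' z : ℂ} (hA : HasDerivAt A A' z) (hB : HasDerivAt B B' z)
    (hf : f =ᶠ[𝓝 z] fun w => c * ((A w + conj' (B w)) / 2)) :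
    rFr f z = c * ((z * A' + conj' (z * B')) / 2) := by
  have hA1 := hA.complexToReal_fderiv
  have hB1 := hB.complexToReal_fderiv
  have h1 : HasFDerivAt (fun w => conj' (B w)) _ z :=
    (Complex.conjCLE.toContinuousLinearMap.hasFDerivAt).comp z hB1
  have h2 := (((hA1.add h1).mul_const (1/2)).const_mul c)
  have h3 : f =ᶠ[𝓝 z] fun w => c * ((A w + conj' (B w)) * (1/2)) := by
    filter_upwards [hf] with w hw
    rw [hw]; ring
  have h4 := (h2.congr_of_eventuallyEq h3).fderiv
  unfold rFr wdz wdzb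
  rw [h4]
  simp
  linear_combination (c * (-z * A' + 0) / 2 - c/2 * conj' z * conj' B' + c / 4 * (z * A' + z * conj' B' + conj' z * A' + conj' z * conj' B')) * Complex.I_sq

lemma harm_of {f A B : ℂ → ℂ} (hA : DifferentiableOn ℂ A (ball 0 1))
    (hB : DifferentiableOn ℂ B (ball 0 1))
    (hf : ∀ z ∈ ball (0:ℂ) 1, f z = A z + conj' (B z)) : HarmonicOnD f := by
  have key : ∀ z ∈ ball (0:ℂ) 1, InnerProductSpace.HarmonicAt f z := by
    intro z hz
    have hn := isOpen_ball.mem_nhds hz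
    have a := (hA.analyticAt hn).harmonicAt
    have b := (hB.analyticAt hn).harmonicAt_conj
    refine (InnerProductSpace.harmonicAt_congr_nhds ?_).2 (a.add b)
    filter_upwards [hn] with w hw
    exact hf w hw
  refine ⟨fun z hz => (key z hz).1.contDiffWithinAt, fun z hz => ?_⟩
  have hz2 := (key z hz).2.self_of_nhds
  rw [InnerProductSpace.laplacian_eq_iteratedFDeriv_complexPlane] at hz2
  simp only [iteratedFDeriv_two_apply] at hz2
  have hd : DifferentiableAt ℝ (fderiv ℝ f) z :=
    ((key z hz).1.fderiv_right (m := 1) (by norm_num)).differentiableAt (by norm_num)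
  have e : ∀ v, fderiv ℝ (fun w => fderiv ℝ f w v) z = (fderiv ℝ (fderiv ℝ f) z).flip v := by
    intro v
    have := (hd.hasFDerivAt.clm_apply (hasFDerivAt_const v z)).fderiv
    rw [this]; ext; simp
  rw [e, e]
  simpa using hz2

lemma main_formula {F : ℂ → ℂ} {Fd : ℝ → ℂ} (hF : IsACDeriv F Fd) :
    HarmonicOnD (rFr (poissonInt F)) ∧ ∀ z ∈ ball (0:ℂ) 1,
      rFr (poissonInt F) z = (1 / (2 * π)) * VS Fd z := by
  obtain ⟨h1, h2, h3⟩ := hF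
  have hT : (0:ℝ) ≤ 2 * π := by positivity
  have hi : Integrable Fd muT := by
    have := h1 0 (2 * π)
    rwa [intervalIntegrable_iff_integrableOn_Ioc_of_le hT] at this
  let Φ : ℝ → ℂ := fun t => F (Complex.exp ((t : ℂ) * Complex.I))
  have hΦper : Φ (2 * π) = Φ 0 := by
    simp only [Φ]; push_cast; rw [Complex.exp_two_pi_mul_I]; simp
  have hΦc : Continuous Φ := by
    have : Φ = fun t => F 1 + ∫ s in (0:ℝ)..t, Fd s := funext h3
    rw [this]
    exact continuous_const.add (intervalIntegral.continuous_primitive h1 0)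
  have hΦi : Integrable Φ muT := by
    have := hΦc.intervalIntegrable (μ := volume) 0 (2*π)
    rwa [intervalIntegrable_iff_integrableOn_Ioc_of_le hT] at this
  have h3c : ∀ t, conj' (Φ t) = conj' (F 1) + ∫ s in (0:ℝ)..t, conj' (Fd s) := by
    intro t
    simp only [Φ]
    rw [h3 t, map_add, intervalIntegral.intervalIntegral_eq_integral_uIoc,
      intervalIntegral.intervalIntegral_eq_integral_uIoc, integral_conj]
    split_ifs <;> simp
  have key : ∀ z ∈ ball (0:ℂ) 1, rFr (poissonInt F) z = (1 / (2 * π)) * VS Fd z := by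
    intro z hz
    have hz' : ‖z‖ < 1 := by simpa using hz
    rw [rFr_of (HS_deriv hΦi hz').differentiableAt.hasDerivAt
      (HS_deriv (conj_int hΦi) hz').differentiableAt.hasDerivAt (f := poissonInt F)
      (c := 1 / (2 * π)), zHS_deriv hi h3 hΦper hΦi hz',
      zHS_deriv (conj_int hi) h3c (by simp only [hΦper]) (conj_int hΦi) hz', VS_eq hi hz']
    filter_upwards [isOpen_ball.mem_nhds hz] with w hw
    exact poissonInt_eq F (fun t => rfl) hΦi (by simpa using hw)
  refine ⟨?_, key⟩
  have hd : ∀ {φ : ℝ → ℂ}, Integrable φ muT → DifferentiableOn ℂ (HS φ) (ball 0 1) :=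
    fun hφ z hz => (HS_deriv hφ (by simpa using hz)).differentiableAt.differentiableWithinAt
  refine harm_of (A := fun z => (1 / (2 * π)) * (-Complex.I * HS Fd z / 2))
    (B := fun z => (1 / (2 * π)) * (-Complex.I * HS (fun t => conj' (Fd t)) z / 2)) ?_ ?_ ?_
  · exact (((hd hi).const_mul _).div_const _).const_mul _
  · exact (((hd (conj_int hi)).const_mul _).div_const _).const_mul _
  · intro z hz
    rw [key z hz, VS_eq hi (by simpa using hz)]
    have c2 : conj' (2:ℂ) = 2 := map_ofNat _ 2
    simp [c2]
    ring

def cc (r θ : ℝ) : ℂ := (r : ℂ) * Complex.exp ((θ : ℂ) * Complex.I)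

@[fun_prop] lemma cc_cont (r : ℝ) : Continuous (cc r) := by unfold cc; fun_prop

lemma cc_norm {r : ℝ} (hr : 0 < r) (θ : ℝ) : ‖cc r θ‖ = r := by
  simp [cc, abs_of_pos hr]

lemma cc_ee_norm {r : ℝ} (hr : 0 < r) (θ t : ℝ) : ‖cc r θ * ee t‖ = r := by
  rw [norm_mul_ee, cc_norm hr]

lemma cont_int {g : ℝ → ℂ} (hg : Continuous g) : Integrable g muT := by
  have := hg.intervalIntegrable (μ := volume) 0 (2*π)
  rwa [intervalIntegrable_iff_integrableOn_Ioc_of_le (by positivity)] at this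

lemma cont_intR {g : ℝ → ℝ} (hg : Continuous g) : Integrable g muT := by
  have := hg.intervalIntegrable (μ := volume) 0 (2*π)
  rwa [intervalIntegrable_iff_integrableOn_Ioc_of_le (by positivity)] at this

lemma mean_val {G : ℂ → ℂ} (hG : DifferentiableOn ℂ G (ball 0 1)) {r : ℝ} (hr : 0 < r)
    (hr1 : r < 1) : ∫ θ, G (cc r θ) ∂muT = 2 * π * G 0 := by
  have hd : DiffContOnCl ℂ G (ball 0 |r|) := by
    rw [abs_of_pos hr]
    exact (hG.mono (closedBall_subset_ball hr1)).diffContOnCl_ball subset_rfl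
  have := hd.circleAverage
  rw [Real.circleAverage_def, intervalIntegral.integral_of_le (by positivity)] at this
  rw [← this]
  have hπ : (π : ℂ) ≠ 0 := by exact_mod_cast Real.pi_ne_zero
  simp only [circleMap, zero_add, cc, Complex.real_smul]
  push_cast
  rw [← mul_assoc, mul_inv_cancel₀ (by simp [hπ]), one_mul]

lemma K_cont {r : ℝ} (hr : 0 < r) (hr1 : r < 1) :
    Continuous fun q : ℝ × ℝ => SK (cc r q.1 * ee q.2) := by
  rw [continuous_iff_continuousAt]
  intro q
  have : ‖cc r q.1 * ee q.2‖ < 1 := by rwa [cc_ee_norm hr]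
  refine ContinuousAt.comp (g := SK) (f := fun q : ℝ × ℝ => cc r q.1 * ee q.2)
    (SK_deriv this).continuousAt ?_
  exact (((cc_cont r).comp continuous_fst).mul (ee_cont.comp continuous_snd)).continuousAt

lemma K_symm (r θ t : ℝ) : SK (cc r t * ee θ) = conj' (SK (cc r θ * ee t)) := by
  have h : cc r t * ee θ = conj' (cc r θ * ee t) := by
    simp only [cc, ee, map_mul, ← Complex.exp_conj, Complex.conj_ofReal, Complex.conj_I, map_neg]
    rw [mul_assoc, mul_assoc, ← Complex.exp_add, ← Complex.exp_add]
    congr 2; ring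
  rw [h]; simp [SK]

lemma SK_ee_diff (t : ℝ) : DifferentiableOn ℂ (fun z => SK (z * ee t)) (ball 0 1) := by
  intro z hz
  have h1 : ‖z * ee t‖ < 1 := by rw [norm_mul_ee]; simpa using hz
  have h2 : HasDerivAt (fun w => w * ee t) (ee t) z := by
    simpa using (hasDerivAt_id z).mul_const (ee t)
  exact ((SK_deriv h1).comp z h2).differentiableAt.differentiableWithinAt

lemma K_mean {r : ℝ} (hr : 0 < r) (hr1 : r < 1) (t : ℝ) :
    ∫ θ, (SK (cc r θ * ee t)).re ∂muT = 2 * π := by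
  have h := mean_val (SK_ee_diff t) hr hr1
  have hc : Continuous (fun θ => SK (cc r θ * ee t)) :=
    Continuous.comp (g := fun q : ℝ × ℝ => SK (cc r q.1 * ee q.2)) (f := fun θ : ℝ => (θ, t))
      (K_cont hr hr1) (by fun_prop)
  have hi : Integrable (fun θ => SK (cc r θ * ee t)) muT := cont_int hc
  have h2 : ∫ θ, (SK (cc r θ * ee t)).re ∂muT = (∫ θ, SK (cc r θ * ee t) ∂muT).re :=
    Complex.reCLM.integral_comp_comm hi
  have h3 : SK (0 * ee t) = 1 := by simp [SK]
  rw [h2, h, h3, mul_one]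
  have h4 : (2 * (π : ℂ)) = ((2 * π : ℝ) : ℂ) := by push_cast; rfl
  rw [h4, Complex.ofReal_re]

lemma K_mean' {r : ℝ} (hr : 0 < r) (hr1 : r < 1) (θ : ℝ) :
    ∫ t, (SK (cc r θ * ee t)).re ∂muT = 2 * π := by
  rw [← K_mean hr hr1 θ]
  congr 1; ext t
  rw [K_symm r θ t]; simp

lemma P_pos {w : ℂ} (h : ‖w‖ < 1) : 0 < (SK w).re := by
  rw [← poissonKer_eq]
  unfold poissonKer
  have := one_sub_ne h
  have h2 : 0 < ‖1 - w‖ := norm_pos_iff.2 this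
  have h3 : ‖w‖ ^ 2 < 1 := by
    have := norm_nonneg w; nlinarith
  exact div_pos (by linarith) (by positivity)

lemma trig_aux {p : ℝ} (hp : 1 < p) (hp2 : p ≤ 2) : ∃ A B : ℝ, 0 ≤ A ∧ 0 ≤ B ∧ ∀ w : ℂ,
    0 < w.re → ‖w‖ ^ p ≤ A * w.re ^ p - B * (w ^ (p : ℂ)).re := by
  have hπ := Real.pi_pos
  set θ0 : ℝ := π / 2 * ((1 + p) / 2) / p with hθ0
  have hpθ : θ0 * p = π / 2 * ((1 + p) / 2) := by rw [hθ0]; field_simp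
  have hθ0pos : 0 < θ0 := by positivity
  have hθ0lt : θ0 < π / 2 := by
    rw [hθ0, div_lt_iff₀ (by linarith)]
    nlinarith
  set c : ℝ := - Real.cos (θ0 * p) with hc
  have hcpos : 0 < c := by
    rw [hc, neg_pos]
    apply Real.cos_neg_of_pi_div_two_lt_of_lt <;> rw [hpθ] <;> nlinarith
  set d : ℝ := Real.cos θ0 with hd
  have hdpos : 0 < d := Real.cos_pos_of_mem_Ioo ⟨by linarith, hθ0lt⟩
  have hdp : 0 < d ^ p := Real.rpow_pos_of_pos hdpos p
  refine ⟨(1 + 1 / c) / d ^ p, 1 / c, by positivity, by positivity, fun w hw => ?_⟩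
  rw [Complex.cpow_ofReal_re]
  have hw0 : w ≠ 0 := by rintro rfl; simp at hw
  set θ := |Complex.arg w| with hθ
  have hθlt : θ < π / 2 := Complex.abs_arg_lt_pi_div_two_iff.2 (Or.inl hw)
  have hθ0' : 0 ≤ θ := abs_nonneg _
  have e1 : w.re = ‖w‖ * Real.cos θ := by
    rw [hθ, Real.cos_abs, Complex.norm_mul_cos_arg]
  have e2 : Real.cos (Complex.arg w * p) = Real.cos (θ * p) := by
    rw [← Real.cos_abs (Complex.arg w * p), abs_mul, abs_of_pos (by linarith : (0:ℝ) < p)]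
  have hcos : 0 ≤ Real.cos θ := Real.cos_nonneg_of_mem_Icc ⟨by linarith, hθlt.le⟩
  rw [e1, e2, Real.mul_rpow (norm_nonneg _) hcos]
  have key : 1 ≤ (1 + 1 / c) / d ^ p * Real.cos θ ^ p - 1 / c * Real.cos (θ * p) := by
    by_cases h : θ ≤ θ0
    · have h1 : d ≤ Real.cos θ := Real.cos_le_cos_of_nonneg_of_le_pi hθ0' (by linarith) h
      have h2 : d ^ p ≤ Real.cos θ ^ p := Real.rpow_le_rpow hdpos.le h1 (by linarith)
      have h3 : 1 + 1 / c ≤ (1 + 1 / c) / d ^ p * Real.cos θ ^ p := by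
        rw [div_mul_eq_mul_div, le_div_iff₀ hdp]
        gcongr
      have h4 : 1 / c * Real.cos (θ * p) ≤ 1 / c :=
        mul_le_of_le_one_right (by positivity) (Real.cos_le_one _)
      linarith
    · push Not at h
      have h1 : Real.cos (θ * p) ≤ Real.cos (θ0 * p) := by
        apply Real.cos_le_cos_of_nonneg_of_le_pi
        · positivity
        · nlinarith
        · nlinarith
      have h2 : 0 ≤ (1 + 1 / c) / d ^ p * Real.cos θ ^ p := by positivity
      have h3 : 1 / c * Real.cos (θ * p) ≤ 1 / c * (-c) := by
        gcongr; rw [hc]; linarith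
      have h4 : 1 / c * (-c) = -1 := by field_simp
      linarith
  have hn : 0 ≤ ‖w‖ ^ p := by positivity
  nlinarith [mul_le_mul_of_nonneg_left key hn]

lemma tangent {p x a : ℝ} (hp : 1 < p) (hx : 0 ≤ x) (ha : 0 < a) :
    a ^ p + p * a ^ (p - 1) * (x - a) ≤ x ^ p := by
  have h := one_add_mul_self_le_rpow_one_add (s := x / a - 1) (p := p)
    (by have : 0 ≤ x / a := by positivity
        linarith) hp.le
  have h2 : 1 + (x / a - 1) = x / a := by ring
  rw [h2, Real.div_rpow hx ha.le, le_div_iff₀ (by positivity)] at h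
  have h3 : a ^ (p - 1) = a ^ p / a := by
    rw [Real.rpow_sub ha, Real.rpow_one]
  rw [h3]
  calc _ = (1 + p * (x / a - 1)) * a ^ p := by field_simp
    _ ≤ _ := h

lemma K_re_bdd {r : ℝ} (hr : 0 < r) (hr1 : r < 1) (θ t : ℝ) :
    ‖(SK (cc r θ * ee t)).re‖ ≤ 2 / (1 - r) :=
  (Complex.abs_re_le_norm _).trans (SK_bound (cc_ee_norm hr θ t).le hr1)

lemma K_im_bdd {r : ℝ} (hr : 0 < r) (hr1 : r < 1) (θ t : ℝ) :
    ‖(SK (cc r θ * ee t)).im‖ ≤ 2 / (1 - r) :=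
  (Complex.abs_im_le_norm _).trans (SK_bound (cc_ee_norm hr θ t).le hr1)

lemma Pker_int {ψ : ℝ → ℝ} (hψ : Integrable ψ muT) {r : ℝ} (hr : 0 < r) (hr1 : r < 1) (θ : ℝ) :
    Integrable (fun t => (SK (cc r θ * ee t)).re * ψ t) muT := by
  refine hψ.bdd_mul (c := 2 / (1 - r)) ?_ (.of_forall fun t => K_re_bdd hr hr1 θ t)
  exact (Complex.continuous_re.comp ((K_cont hr hr1).comp
    (by fun_prop : Continuous fun t : ℝ => (θ, t)))).aestronglyMeasurable

lemma Pker_int2 {ψ : ℝ → ℝ} (hψ : Integrable ψ muT) {r : ℝ} (hr : 0 < r) (hr1 : r < 1) :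
    Integrable (fun q : ℝ × ℝ => (SK (cc r q.1 * ee q.2)).re * ψ q.2) (muT.prod muT) := by
  refine (hψ.comp_snd muT).bdd_mul (c := 2 / (1 - r)) ?_
    (.of_forall fun q => K_re_bdd hr hr1 q.1 q.2)
  exact (Complex.continuous_re.comp (K_cont hr hr1)).aestronglyMeasurable

lemma pois_fubini {ψ : ℝ → ℝ} (hψ : Integrable ψ muT) {r : ℝ} (hr : 0 < r) (hr1 : r < 1) :
    ∫ θ, ∫ t, (SK (cc r θ * ee t)).re * ψ t ∂muT ∂muT = 2 * π * ∫ t, ψ t ∂muT := by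
  rw [integral_integral_swap (Pker_int2 hψ hr hr1), ← integral_const_mul]
  congr 1; ext t
  rw [integral_mul_const, K_mean hr hr1]

lemma pois_jensen {p : ℝ} (hp : 1 < p) {φ : ℝ → ℝ} (h0 : ∀ t, 0 ≤ φ t) (hφ : Integrable φ muT)
    (hφp : Integrable (fun t => φ t ^ p) muT) {r : ℝ} (hr : 0 < r) (hr1 : r < 1) (θ : ℝ)
    (hpos : 0 < ∫ t, (SK (cc r θ * ee t)).re * φ t ∂muT) :
    (∫ t, (SK (cc r θ * ee t)).re * φ t ∂muT) ^ p
      ≤ (2 * π) ^ p * ∫ t, (SK (cc r θ * ee t)).re * φ t ^ p ∂muT := by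
  set u := ∫ t, (SK (cc r θ * ee t)).re * φ t ∂muT with hu
  have hπ := Real.pi_pos
  have hπ3 := Real.pi_gt_three
  set a := u / (2 * π) with ha
  have hapos : 0 < a := by positivity
  have h1 : ∫ t, ((SK (cc r θ * ee t)).re * (a ^ p - p * a ^ (p - 1) * a)
      + p * a ^ (p - 1) * ((SK (cc r θ * ee t)).re * φ t)) ∂muT
      ≤ ∫ t, (SK (cc r θ * ee t)).re * φ t ^ p ∂muT := by
    refine integral_mono ?_ (Pker_int hφp hr hr1 θ) fun t => ?_
    · exact (Pker_int (integrable_const _) hr hr1 θ).add ((Pker_int hφ hr hr1 θ).const_mul _)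
    · have := mul_le_mul_of_nonneg_left (tangent hp (h0 t) hapos)
        (P_pos (by rwa [cc_ee_norm hr] : ‖cc r θ * ee t‖ < 1)).le
      simp only
      linarith
  rw [integral_add (Pker_int (integrable_const _) hr hr1 θ) ((Pker_int hφ hr hr1 θ).const_mul _),
    integral_mul_const, integral_const_mul, K_mean' hr hr1, ← hu] at h1
  have hua : u = a * (2 * π) := by rw [ha]; field_simp
  have h2 : 2 * π * a ^ p ≤ ∫ t, (SK (cc r θ * ee t)).re * φ t ^ p ∂muT := by
    refine le_trans (le_of_eq ?_) h1
    rw [hua]; ring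
  have hap : 0 ≤ a ^ p := by positivity
  rw [hua, Real.mul_rpow hapos.le (by positivity), mul_comm]
  gcongr
  nlinarith

lemma HS_cc_cont {φ : ℝ → ℂ} (hφ : Integrable φ muT) {r : ℝ} (hr : 0 < r) (hr1 : r < 1) :
    Continuous fun θ => HS φ (cc r θ) := by
  rw [continuous_iff_continuousAt]
  intro θ
  exact ContinuousAt.comp (g := HS φ) (f := cc r)
    (HS_deriv hφ (by rwa [cc_norm hr])).continuousAt (cc_cont r).continuousAt

lemma VS_cc_cont {φ : ℝ → ℂ} (hφ : Integrable φ muT) {r : ℝ} (hr : 0 < r) (hr1 : r < 1) :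
    Continuous fun θ => VS φ (cc r θ) := by
  have : ∀ θ, VS φ (cc r θ) = _ := fun θ => VS_eq hφ (by rwa [cc_norm hr] : ‖cc r θ‖ < 1)
  simp_rw [this]
  have h1 := HS_cc_cont hφ hr hr1
  have h2 := HS_cc_cont (conj_int hφ) hr hr1
  exact ((continuous_const.mul h1).add
    (Complex.continuous_conj.comp (continuous_const.mul h2))).div_const _

lemma rpow_cont {g : ℝ → ℝ} (hg : Continuous g) {p : ℝ} (hp : 0 ≤ p) :
    Continuous fun θ => g θ ^ p := hg.rpow_const fun _ => Or.inr hp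

lemma pos_case {p : ℝ} (hp : 1 < p) (hp2 : p ≤ 2) : ∃ C : ℝ, 0 ≤ C ∧ ∀ φ : ℝ → ℝ, (∀ t, 0 ≤ φ t) →
    Integrable φ muT → Integrable (fun t => φ t ^ p) muT → ∀ r : ℝ, 0 < r → r < 1 →
    ∫ θ, ‖VS (fun t => (φ t : ℂ)) (cc r θ)‖ ^ p ∂muT ≤ C * ∫ t, φ t ^ p ∂muT := by
  obtain ⟨A, B, hA, hB, hAB⟩ := trig_aux hp hp2
  have hπ := Real.pi_pos
  have hp0 : 0 ≤ p := by linarith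
  refine ⟨A * ((2 * π) ^ p * (2 * π)), by positivity, fun φ h0 hφ hφp r hr hr1 => ?_⟩
  set φc : ℝ → ℂ := fun t => (φ t : ℂ) with hφc
  have hφci : Integrable φc muT := hφ.ofReal
  have hI : 0 ≤ ∫ t, φ t ^ p ∂muT := integral_nonneg fun t => Real.rpow_nonneg (h0 t) p
  have hre : ∀ z : ℂ, ‖z‖ < 1 → (HS φc z).re = ∫ t, (SK (z * ee t)).re * φ t ∂muT := by
    intro z hz
    have h2 : (∫ t, SK (z * ee t) * φc t ∂muT).re = ∫ t, (SK (z * ee t) * φc t).re ∂muT :=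
      (Complex.reCLM.integral_comp_comm (SK_mul_int hφci hz)).symm
    rw [HS, h2]
    congr 1; ext t
    simp [hφc]
  have him : ∀ z : ℂ, ‖z‖ < 1 → VS φc z = ((HS φc z).im : ℂ) := by
    intro z hz
    have h2 : (∫ t, SK (z * ee t) * φc t ∂muT).im = ∫ t, (SK (z * ee t) * φc t).im ∂muT :=
      (Complex.imCLM.integral_comp_comm (SK_mul_int hφci hz)).symm
    rw [HS, h2, VS, ← integral_complex_ofReal]
    congr 1; ext t
    simp [hφc]
  by_cases hz : ∫ t, φ t ∂muT = 0
  · have hae : φ =ᵐ[muT] 0 := (integral_eq_zero_iff_of_nonneg h0 hφ).1 hz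
    have hV : ∀ z, VS φc z = 0 := by
      intro z
      apply integral_eq_zero_of_ae
      filter_upwards [hae] with t ht
      simp [hφc, ht]
    simp only [hV]
    simp only [norm_zero, Real.zero_rpow (by linarith : p ≠ 0), integral_zero]
    positivity
  have hφpos : 0 < ∫ t, φ t ∂muT := lt_of_le_of_ne (integral_nonneg h0) (Ne.symm hz)
  have hpos : ∀ z : ℂ, ‖z‖ < 1 → 0 < (HS φc z).re := by
    intro z hz1
    rw [hre z hz1]
    have hnn : ∀ t, 0 ≤ (SK (z * ee t)).re * φ t := fun t =>
      mul_nonneg (P_pos (by rwa [norm_mul_ee])).le (h0 t)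
    have hint : Integrable (fun t => (SK (z * ee t)).re * φ t) muT := by
      refine (SK_mul_int hφci hz1).re.congr (.of_forall fun t => ?_)
      simp [hφc]
    refine lt_of_le_of_ne (integral_nonneg hnn) fun he => hz ?_
    have hae := (integral_eq_zero_iff_of_nonneg hnn hint).1 he.symm
    apply integral_eq_zero_of_ae
    filter_upwards [hae] with t ht
    have hne := (P_pos (by rwa [norm_mul_ee] : ‖z * ee t‖ < 1)).ne'
    simpa [hne] using ht
  have hG : DifferentiableOn ℂ (fun z => HS φc z ^ (p : ℂ)) (ball 0 1) := by
    intro z hz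
    have hz1 : ‖z‖ < 1 := by simpa using hz
    exact ((HS_deriv hφci hz1).differentiableAt.cpow (differentiableAt_const _)
      (Or.inl (hpos z hz1))).differentiableWithinAt
  have hH := HS_cc_cont hφci hr hr1
  have hGc : Continuous fun θ => HS φc (cc r θ) ^ (p : ℂ) :=
    hH.cpow continuous_const fun θ => Or.inl (hpos _ (by rwa [cc_norm hr]))
  have hmv := mean_val hG hr hr1
  have hmv2 : 0 ≤ ∫ θ, (HS φc (cc r θ) ^ (p : ℂ)).re ∂muT := by
    have h2 : ∫ θ, (HS φc (cc r θ) ^ (p : ℂ)).re ∂muT = (∫ θ, HS φc (cc r θ) ^ (p : ℂ) ∂muT).re :=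
      Complex.reCLM.integral_comp_comm (cont_int hGc)
    rw [h2, hmv]
    have h3 : HS φc 0 = ((∫ t, φ t ∂muT : ℝ) : ℂ) := by
      rw [HS, ← integral_complex_ofReal]
      congr 1; ext t; simp [SK, hφc]
    rw [h3, ← Complex.ofReal_cpow hφpos.le]
    have h4 : (2 * (π : ℂ)) = ((2 * π : ℝ) : ℂ) := by push_cast; rfl
    rw [h4, ← Complex.ofReal_mul, Complex.ofReal_re]
    positivity
  have huc : Continuous fun θ => (HS φc (cc r θ)).re ^ p :=
    rpow_cont (Complex.continuous_re.comp hH) hp0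
  have hGre : Integrable (fun θ => (HS φc (cc r θ) ^ (p : ℂ)).re) muT :=
    cont_intR (Complex.continuous_re.comp hGc)
  have s1 : ∫ θ, ‖VS φc (cc r θ)‖ ^ p ∂muT
      ≤ ∫ θ, (A * (HS φc (cc r θ)).re ^ p - B * (HS φc (cc r θ) ^ (p : ℂ)).re) ∂muT := by
    refine integral_mono ?_ ?_ fun θ => ?_
    · exact cont_intR (rpow_cont (VS_cc_cont hφci hr hr1).norm hp0)
    · exact ((cont_intR huc).const_mul A).sub
        (hGre.const_mul B)
    · have hn : ‖cc r θ‖ < 1 := by rwa [cc_norm hr]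
      refine le_trans ?_ (hAB _ (hpos _ hn))
      simp only
      rw [him _ hn, Complex.norm_real]
      exact Real.rpow_le_rpow (norm_nonneg _) (Complex.abs_im_le_norm _) hp0
  rw [integral_sub ((cont_intR huc).const_mul A)
        (hGre.const_mul B), integral_const_mul,
        integral_const_mul] at s1
  have s2 : ∫ θ, (HS φc (cc r θ)).re ^ p ∂muT ≤ (2 * π) ^ p * (2 * π * ∫ t, φ t ^ p ∂muT) := by
    rw [← pois_fubini hφp hr hr1, ← integral_const_mul]
    refine integral_mono (cont_intR huc) ?_ fun θ => ?_
    · exact ((Pker_int2 hφp hr hr1).integral_prod_left).const_mul _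
    · have hn : ‖cc r θ‖ < 1 := by rwa [cc_norm hr]
      have := hpos _ hn
      simp only
      rw [hre _ hn] at this ⊢
      exact pois_jensen hp h0 hφ hφp hr hr1 θ this
  have s3 := mul_nonneg hB hmv2
  have s4 := mul_le_mul_of_nonneg_left s2 hA
  calc _ ≤ _ := s1
    _ ≤ A * ((2 * π) ^ p * (2 * π * ∫ t, φ t ^ p ∂muT)) := by linarith
    _ = _ := by ring

def RieszP (p : ℝ) : Prop := ∃ C : ℝ, 0 ≤ C ∧ ∀ φ : ℝ → ℂ,
    Integrable φ muT → Integrable (fun t => ‖φ t‖ ^ p) muT → ∀ r : ℝ, 0 < r → r < 1 →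
    ∫ θ, ‖VS φ (cc r θ)‖ ^ p ∂muT ≤ C * ∫ t, ‖φ t‖ ^ p ∂muT

lemma VS_int {φ : ℝ → ℂ} (hφ : Integrable φ muT) {z : ℂ} (h : ‖z‖ < 1) :
    Integrable (fun t => ((SK (z * ee t)).im : ℂ) * φ t) muT := by
  refine hφ.bdd_mul (c := 2 / (1 - ‖z‖)) ?_ ?_
  · exact (Complex.continuous_ofReal.comp
      (Complex.continuous_im.comp (SK_ee_cont h))).aestronglyMeasurable
  · exact .of_forall fun t => by
      rw [Complex.norm_real]
      exact (Complex.abs_im_le_norm _).trans (SK_bound (norm_mul_ee z t).le h)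

lemma four_pow {p a b c d x : ℝ} (hp : 0 ≤ p) (ha : 0 ≤ a) (hb : 0 ≤ b) (hc : 0 ≤ c) (hd : 0 ≤ d)
    (hx0 : 0 ≤ x) (hx : x ≤ a + b + c + d) :
    x ^ p ≤ 4 ^ p * (a ^ p + b ^ p + c ^ p + d ^ p) := by
  have h1 : 0 ≤ a ^ p := by positivity
  have h2 : 0 ≤ b ^ p := by positivity
  have h3 : 0 ≤ c ^ p := by positivity
  have h4 : 0 ≤ d ^ p := by positivity
  have key : ∀ m, 0 ≤ m → x ≤ 4 * m → x ^ p ≤ 4 ^ p * m ^ p := by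
    intro m hm hxm
    rw [← Real.mul_rpow (by norm_num) hm]
    exact Real.rpow_le_rpow hx0 hxm hp
  have h5 : (0:ℝ) ≤ 4 ^ p := by positivity
  by_cases ca : x ≤ 4 * a
  · refine (key a ha ca).trans ?_
    gcongr; linarith
  by_cases cb : x ≤ 4 * b
  · refine (key b hb cb).trans ?_
    gcongr; linarith
  by_cases cc : x ≤ 4 * c
  · refine (key c hc cc).trans ?_
    gcongr; linarith
  · refine (key d hd (by linarith)).trans ?_
    gcongr; linarith

lemma riesz_low {p : ℝ} (hp : 1 < p) (hp2 : p ≤ 2) : RieszP p := by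
  obtain ⟨C, hC, H⟩ := pos_case hp hp2
  have hp0 : 0 ≤ p := by linarith
  refine ⟨4 ^ p * (4 * C), by positivity, fun φ hφ hφp r hr hr1 => ?_⟩
  have part : ∀ L : ℂ → ℝ, Continuous L → (∀ w, 0 ≤ L w) → (∀ w, L w ≤ ‖w‖) →
      Integrable (fun t => (L (φ t) : ℂ)) muT ∧
      ∫ θ, ‖VS (fun t => (L (φ t) : ℂ)) (cc r θ)‖ ^ p ∂muT ≤ C * ∫ t, ‖φ t‖ ^ p ∂muT := by
    intro L hL hL0 hLn
    have hm : AEStronglyMeasurable (fun t => L (φ t)) muT :=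
      hL.comp_aestronglyMeasurable hφ.aestronglyMeasurable
    have hi : Integrable (fun t => L (φ t)) muT := by
      refine hφ.norm.mono' hm (.of_forall fun t => ?_)
      rw [Real.norm_of_nonneg (hL0 _)]; exact hLn _
    have hip : Integrable (fun t => L (φ t) ^ p) muT := by
      refine hφp.mono' ?_ (.of_forall fun t => ?_)
      · exact (Real.continuous_rpow_const hp0).comp_aestronglyMeasurable hm
      · rw [Real.norm_of_nonneg (Real.rpow_nonneg (hL0 _) p)]
        exact Real.rpow_le_rpow (hL0 _) (hLn _) hp0
    refine ⟨hi.ofReal, (H _ (fun t => hL0 _) hi hip r hr hr1).trans ?_⟩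
    refine mul_le_mul_of_nonneg_left ?_ hC
    exact integral_mono hip hφp fun t => Real.rpow_le_rpow (hL0 _) (hLn _) hp0
  obtain ⟨i1, b1⟩ := part (fun w => max w.re 0) (by fun_prop) (fun w => le_max_right _ _)
    (fun w => max_le (Complex.re_le_norm w) (norm_nonneg _))
  obtain ⟨i2, b2⟩ := part (fun w => max (-w.re) 0) (by fun_prop) (fun w => le_max_right _ _)
    (fun w => max_le ((neg_le_abs _).trans (Complex.abs_re_le_norm w)) (norm_nonneg _))
  obtain ⟨i3, b3⟩ := part (fun w => max w.im 0) (by fun_prop) (fun w => le_max_right _ _)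
    (fun w => max_le (Complex.im_le_norm w) (norm_nonneg _))
  obtain ⟨i4, b4⟩ := part (fun w => max (-w.im) 0) (by fun_prop) (fun w => le_max_right _ _)
    (fun w => max_le ((neg_le_abs _).trans (Complex.abs_im_le_norm w)) (norm_nonneg _))
  set φ1 : ℝ → ℂ := fun t => ((max (φ t).re 0 : ℝ) : ℂ)
  set φ2 : ℝ → ℂ := fun t => ((max (-(φ t).re) 0 : ℝ) : ℂ)
  set φ3 : ℝ → ℂ := fun t => ((max (φ t).im 0 : ℝ) : ℂ)
  set φ4 : ℝ → ℂ := fun t => ((max (-(φ t).im) 0 : ℝ) : ℂ)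
  have hdec : ∀ t, φ t = φ1 t - φ2 t + Complex.I * (φ3 t - φ4 t) := by
    intro t
    have hm : ∀ x : ℝ, max x 0 - max (-x) 0 = x := fun x => by
      rcases le_total x 0 with h | h
      · rw [max_eq_right h, max_eq_left (by linarith)]; ring
      · rw [max_eq_left h, max_eq_right (by linarith)]; ring
    simp only [φ1, φ2, φ3, φ4]
    rw [← Complex.ofReal_sub, ← Complex.ofReal_sub, hm, hm, mul_comm, Complex.re_add_im]
  have hV : ∀ z : ℂ, ‖z‖ < 1 →
      VS φ z = VS φ1 z - VS φ2 z + Complex.I * (VS φ3 z - VS φ4 z) := by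
    intro z hz
    have j1 := VS_int i1 hz
    have j2 := VS_int i2 hz
    have j3 := VS_int i3 hz
    have j4 := VS_int i4 hz
    have j12 : Integrable (fun t => ((SK (z * ee t)).im : ℂ) * φ1 t
      - ((SK (z * ee t)).im : ℂ) * φ2 t) muT := j1.sub j2
    have j34 : Integrable (fun t => ((SK (z * ee t)).im : ℂ) * φ3 t
      - ((SK (z * ee t)).im : ℂ) * φ4 t) muT := j3.sub j4
    unfold VS
    rw [← integral_sub j1 j2, ← integral_sub j3 j4, ← integral_const_mul,
      ← integral_add j12 (j34.const_mul _)]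
    congr 1; ext t
    rw [hdec t]; ring
  have ci : ∀ {ψ : ℝ → ℂ}, Integrable ψ muT → Integrable (fun θ => ‖VS ψ (cc r θ)‖ ^ p) muT :=
    fun h => cont_intR (rpow_cont (VS_cc_cont h hr hr1).norm hp0)
  have hb : ∫ θ, ‖VS φ (cc r θ)‖ ^ p ∂muT ≤ ∫ θ, 4 ^ p * (‖VS φ1 (cc r θ)‖ ^ p
      + ‖VS φ2 (cc r θ)‖ ^ p + ‖VS φ3 (cc r θ)‖ ^ p + ‖VS φ4 (cc r θ)‖ ^ p) ∂muT := by
    refine integral_mono (ci hφ) ((((ci i1).add (ci i2)).add (ci i3)).add (ci i4) |>.const_mul _)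
      fun θ => ?_
    refine four_pow hp0 (norm_nonneg _) (norm_nonneg _) (norm_nonneg _) (norm_nonneg _)
      (norm_nonneg _) ?_
    rw [hV _ (by rwa [cc_norm hr])]
    refine (norm_add_le _ _).trans ?_
    rw [norm_mul, Complex.norm_I, one_mul]
    have := norm_sub_le (VS φ1 (cc r θ)) (VS φ2 (cc r θ))
    have := norm_sub_le (VS φ3 (cc r θ)) (VS φ4 (cc r θ))
    linarith
  have k12 : Integrable (fun θ => ‖VS φ1 (cc r θ)‖ ^ p + ‖VS φ2 (cc r θ)‖ ^ p) muT :=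
    (ci i1).add (ci i2)
  have k123 : Integrable (fun θ => ‖VS φ1 (cc r θ)‖ ^ p + ‖VS φ2 (cc r θ)‖ ^ p
      + ‖VS φ3 (cc r θ)‖ ^ p) muT := k12.add (ci i3)
  rw [integral_const_mul, integral_add k123 (ci i4),
    integral_add k12 (ci i3), integral_add (ci i1) (ci i2)] at hb
  refine hb.trans ?_
  rw [mul_assoc]
  gcongr
  linarith

lemma dual_fubini {φ g : ℝ → ℂ} (hφ : Integrable φ muT) (hg : Integrable g muT)
    {r : ℝ} (hr : 0 < r) (hr1 : r < 1) :
    ∫ θ, VS φ (cc r θ) * g θ ∂muT = - ∫ t, φ t * VS g (cc r t) ∂muT := by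
  have hL : ∫ θ, VS φ (cc r θ) * g θ ∂muT
      = ∫ θ, ∫ t, ((SK (cc r θ * ee t)).im : ℂ) * (g θ * φ t) ∂muT ∂muT := by
    congr 1; ext θ
    rw [VS, ← integral_mul_const]
    congr 1; ext t; ring
  have hR : - ∫ t, φ t * VS g (cc r t) ∂muT
      = ∫ t, ∫ θ, ((SK (cc r θ * ee t)).im : ℂ) * (g θ * φ t) ∂muT ∂muT := by
    rw [← integral_neg]
    congr 1; ext t
    rw [VS, ← integral_const_mul, ← integral_neg]
    congr 1; ext θ
    rw [K_symm r θ t, Complex.conj_im]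
    push_cast; ring
  rw [hL, hR]
  apply integral_integral_swap
  refine (hg.mul_prod hφ).bdd_mul (c := 2 / (1 - r))
    (f := fun q : ℝ × ℝ => ((SK (cc r q.1 * ee q.2)).im : ℂ)) ?_ (.of_forall fun q => ?_)
  · exact (Complex.continuous_ofReal.comp
      (Complex.continuous_im.comp (K_cont hr hr1))).aestronglyMeasurable
  · rw [Complex.norm_real]; exact K_im_bdd hr hr1 q.1 q.2

lemma riesz_high {p : ℝ} (hp : 2 < p) : RieszP p := by
  set q : ℝ := p / (p - 1) with hq
  have hp1 : 0 < p - 1 := by linarith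
  have hp0 : 0 < p := by linarith
  have hq1 : 1 < q := by rw [hq, lt_div_iff₀ hp1]; linarith
  have hq2 : q ≤ 2 := by rw [hq, div_le_iff₀ hp1]; linarith
  have hq0 : 0 < q := by linarith
  have hpq : p.HolderConjugate q := by
    rw [hq]; exact Real.HolderConjugate.conjExponent (by linarith)
  obtain ⟨C, hC, H⟩ := riesz_low hq1 hq2
  set l : ℝ := (2 * C + 1) ^ (1 / q) with hl
  have hlpos : 0 < l := by positivity
  have hlq : l ^ q = 2 * C + 1 := by
    rw [hl, ← Real.rpow_mul (by positivity), one_div_mul_cancel hq0.ne', Real.rpow_one]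
  refine ⟨2 * (l ^ p / p), by positivity, fun φ hφ hφp r hr hr1 => ?_⟩
  set v : ℝ → ℂ := fun θ => VS φ (cc r θ) with hv
  have hvc : Continuous v := VS_cc_cont hφ hr hr1
  set g : ℝ → ℂ := fun θ => conj' (v θ) * ((‖v θ‖ ^ (p - 2) : ℝ) : ℂ) with hg
  have hgc : Continuous g := (Complex.continuous_conj.comp hvc).mul
    (Complex.continuous_ofReal.comp (rpow_cont hvc.norm (by linarith)))
  have hgi : Integrable g muT := cont_int hgc
  have hvg : ∀ θ, v θ * g θ = ((‖v θ‖ ^ p : ℝ) : ℂ) := by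
    intro θ
    simp only [hg]
    rw [← mul_assoc, Complex.mul_conj, ← Complex.ofReal_mul, Complex.normSq_eq_norm_sq]
    congr 1
    by_cases h0 : ‖v θ‖ = 0
    · rw [h0, Real.zero_rpow hp0.ne']; simp
    · have : 0 < ‖v θ‖ := lt_of_le_of_ne (norm_nonneg _) (Ne.symm h0)
      rw [← Real.rpow_natCast, ← Real.rpow_add this]; congr 1; push_cast; ring
  have hgn : ∀ θ, ‖g θ‖ ^ q = ‖v θ‖ ^ p := by
    intro θ
    have h1 : ‖g θ‖ = ‖v θ‖ ^ (p - 1) := by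
      simp only [hg]
      rw [norm_mul, RCLike.norm_conj, Complex.norm_real, Real.norm_of_nonneg (by positivity)]
      by_cases h0 : ‖v θ‖ = 0
      · rw [h0, Real.zero_rpow hp1.ne']; simp
      · have : 0 < ‖v θ‖ := lt_of_le_of_ne (norm_nonneg _) (Ne.symm h0)
        nth_rewrite 1 [← Real.rpow_one ‖v θ‖]
        rw [← Real.rpow_add this]; congr 1; ring
    rw [h1, ← Real.rpow_mul (norm_nonneg _)]
    congr 1
    rw [hq]; field_simp
  set I0 := ∫ θ, ‖v θ‖ ^ p ∂muT with hI0
  have hI0n : 0 ≤ I0 := integral_nonneg fun θ => by positivity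
  have hgq : Integrable (fun θ => ‖g θ‖ ^ q) muT := cont_intR (rpow_cont hgc.norm hq0.le)
  have hH := H g hgi hgq r hr hr1
  simp_rw [hgn] at hH
  rw [← hI0] at hH
  have hVg : Continuous fun t => VS g (cc r t) := VS_cc_cont hgi hr hr1
  have hVgq : Integrable (fun t => ‖VS g (cc r t)‖ ^ q) muT :=
    cont_intR (rpow_cont hVg.norm hq0.le)
  have e1 : (I0 : ℂ) = - ∫ t, φ t * VS g (cc r t) ∂muT := by
    rw [← dual_fubini hφ hgi hr hr1, hI0, ← integral_complex_ofReal]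
    congr 1; ext θ
    exact (hvg θ).symm
  have e2 : I0 ≤ ∫ t, ‖φ t * VS g (cc r t)‖ ∂muT := by
    calc I0 = ‖(I0 : ℂ)‖ := by rw [Complex.norm_real, Real.norm_of_nonneg hI0n]
      _ = ‖∫ t, φ t * VS g (cc r t) ∂muT‖ := by rw [e1, norm_neg]
      _ ≤ _ := norm_integral_le_integral_norm _
  have e3 : ∫ t, ‖φ t * VS g (cc r t)‖ ∂muT
      ≤ ∫ t, (l ^ p / p * ‖φ t‖ ^ p + 1 / ((2 * C + 1) * q) * ‖VS g (cc r t)‖ ^ q) ∂muT := by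
    refine integral_mono_of_nonneg (.of_forall fun t => norm_nonneg _)
      ((hφp.const_mul _).add (hVgq.const_mul _)) (.of_forall fun t => ?_)
    have hy := Real.young_inequality_of_nonneg (a := l * ‖φ t‖) (b := ‖VS g (cc r t)‖ / l)
      (by positivity) (by positivity) hpq
    rw [Real.mul_rpow hlpos.le (norm_nonneg _), Real.div_rpow (norm_nonneg _) hlpos.le, hlq] at hy
    simp only
    rw [norm_mul]
    calc _ = l * ‖φ t‖ * (‖VS g (cc r t)‖ / l) := by field_simp
      _ ≤ _ := hy
      _ = _ := by field_simp
  rw [integral_add (hφp.const_mul _) (hVgq.const_mul _), integral_const_mul,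
    integral_const_mul] at e3
  have e4 : 1 / ((2 * C + 1) * q) * ∫ t, ‖VS g (cc r t)‖ ^ q ∂muT ≤ 1 / 2 * I0 := by
    calc _ ≤ 1 / ((2 * C + 1) * q) * (C * I0) := by gcongr
      _ = (C / ((2 * C + 1) * q)) * I0 := by ring
      _ ≤ 1 / 2 * I0 := by
        refine mul_le_mul_of_nonneg_right ?_ hI0n
        rw [div_le_div_iff₀ (by positivity) (by norm_num)]
        nlinarith
  linarith

lemma riesz_all {p : ℝ} (hp : 1 < p) : RieszP p := by
  rcases le_or_gt p 2 with h | h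
  · exact riesz_low hp h
  · exact riesz_high h

lemma final_bound {p : ℝ} (hp : 1 < p) {F : ℂ → ℂ} {Fd : ℝ → ℂ}
    (hF : IsACDeriv F Fd) (hLp : MemLpT (ENNReal.ofReal p) Fd) :
    Memhp p (rFr (poissonInt F)) := by
  obtain ⟨hharm, hform⟩ := main_formula hF
  refine ⟨hharm, ?_⟩
  have hp0 : 0 < p := by linarith
  obtain ⟨C, hC, H⟩ := riesz_all hp
  have hi : Integrable Fd muT := by
    have := hF.1 0 (2 * π)
    rwa [intervalIntegrable_iff_integrableOn_Ioc_of_le (by positivity)] at this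
  have hip : Integrable (fun t => ‖Fd t‖ ^ p) muT := by
    have := hLp.integrable_norm_rpow (by simpa using hp0) ENNReal.ofReal_ne_top
    rwa [ENNReal.toReal_ofReal hp0.le] at this
  refine ⟨((1 / (2 * π)) * ((1 / (2 * π)) ^ p * (C * ∫ t, ‖Fd t‖ ^ p ∂muT))) ^ (1 / p),
    fun r hr => ?_⟩
  unfold Mp
  rw [intervalIntegral.integral_of_le (by positivity)]
  have hb := H Fd hi hip r hr.1 hr.2
  have e : ∀ θ : ℝ, ‖rFr (poissonInt F) ((r : ℂ) * Complex.exp ((θ : ℂ) * Complex.I))‖ ^ p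
      = (1 / (2 * π)) ^ p * ‖VS Fd (cc r θ)‖ ^ p := by
    intro θ
    have hz : cc r θ ∈ ball (0:ℂ) 1 := by simpa [cc_norm hr.1] using hr.2
    change ‖rFr (poissonInt F) (cc r θ)‖ ^ p = _
    rw [hform _ hz, norm_mul, Real.mul_rpow (norm_nonneg _) (norm_nonneg _)]
    congr 2
    simp [abs_of_pos Real.pi_pos]
  simp_rw [e]
  rw [integral_const_mul]
  have hnn : 0 ≤ ∫ θ, ‖VS Fd (cc r θ)‖ ^ p ∂muT := integral_nonneg fun θ => by positivity
  refine Real.rpow_le_rpow (by positivity) ?_ (by positivity)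
  gcongr
/-- For `p ∈ (1,∞)`, `F : 𝕋 → ℂ` absolutely continuous with
`Ḟ ∈ L^p(𝕋)` and `f = P[F]`, the function `z ↦ r f_r(z) = z f_z(z) + z̄ f_z̄(z)`
belongs to the harmonic Hardy space `h^p(𝔻)`. -/
theorem stmt3 (p : ℝ) (hp : 1 < p) (F : ℂ → ℂ) (Fd : ℝ → ℂ)
    (hF : IsACDeriv F Fd) (hLp : MemLpT (ENNReal.ofReal p) Fd) :
    Memhp p (rFr (poissonInt F)) := by
  exact final_bound hp hF hLp

end
end
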